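/- arXiv:1505.02431 — 8 statements merged into one kernel-verified Lean document; each statement's English description precedes it below -/
import Mathlib

section
/- The function f(v,t) = (Γ(η−λ+1/2)/Γ(2η+1)) · e^{−Ψ(v,t)/2} · Ψ(v,t)^λ · M_{λ,η}(Ψ(v,t)) satisfies the linear parabolic partial differential equation (σ²v/2)·∂²f/∂v² + (kΘ − (1−δ)μσ/ρ − kv)·∂f/∂v − (C/v)·f + ∂f/∂t = 0 at every point (v,t) with v > 0 and t < T. -/
/-!
Since `Ψ(v,t) = c(t) v` with `c' = c (k + σ² c / 2)`, a function `f(v,t) = g(Ψ(v,t))` solves the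
parabolic equation as soon as `g` solves the ordinary differential equation
`z g'' + (z - 2λ) g' - (2C/σ²) g / z = 0` on `z > 0`; here `kΘ - (1-δ)μσ/ρ = -σ² λ` is used.

For the function at hand `g(z)` is a constant times `e^{-z} z^s M(a,b,z)` with `s = λ + η + 1/2`,
`a = η - λ + 1/2`, `b = 1 + 2η`. Because `s (s - 1 - 2λ) = η² - (λ + 1/2)² = 2C/σ²`, the equation
for `g` reduces to Kummer's equation `z M'' + (b - z) M' - a M = 0`
(`profile_ode`). Kummer's equation (`kummer_ode`) follows by termwise differentiation of an
everywhere convergent power series (`hasDerivAt_entire`) and the recursion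
`(n + 1) (b + n) c_{n+1} = (a + n) c_n` of its coefficients.
-/

/-- The Kummer confluent hypergeometric function
`M(a,b,z) = ∑ ((a)_n / (b)_n) zⁿ/n!`. -/
noncomputable def kummerM (a b z : ℝ) : ℝ :=
  ∑' n : ℕ, ((ascPochhammer ℝ n).eval a / (ascPochhammer ℝ n).eval b) * z ^ n / (n.factorial : ℝ)

/-- The Whittaker function `M_{κ,η}(z) = e^{-z/2} z^{η+1/2} M(η-κ+1/2, 1+2η, z)`. -/
noncomputable def whittakerM (κ η z : ℝ) : ℝ :=
  Real.exp (-z / 2) * z ^ (η + 1/2) * kummerM (η - κ + 1/2) (1 + 2*η) z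

/-! ### Everywhere convergent power series -/

/-- The real power series with coefficients `c` converges absolutely on all of `ℝ`. -/
def EntireCoeff (c : ℕ → ℝ) : Prop := ∀ r : ℝ, 0 ≤ r → Summable fun n => |c n| * r ^ n

/-- Coefficients of the termwise derivative of the power series with coefficients `c`. -/
def derivCoeff (c : ℕ → ℝ) (n : ℕ) : ℝ := (n + 1) * c (n + 1)

/-- The sum of the power series with coefficients `c`. -/
noncomputable def powerSum (c : ℕ → ℝ) (z : ℝ) : ℝ := ∑' n, c n * z ^ n

lemma EntireCoeff.hasSum {c : ℕ → ℝ} (hc : EntireCoeff c) (z : ℝ) :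
    HasSum (fun n => c n * z ^ n) (powerSum c z) := by
  refine Summable.hasSum (Summable.of_norm ?_)
  simpa [abs_mul, abs_pow] using hc |z| (abs_nonneg z)

lemma EntireCoeff.derivCoeff {c : ℕ → ℝ} (hc : EntireCoeff c) : EntireCoeff (derivCoeff c) := by
  intro r hr
  have h := (summable_nat_add_iff 1).2 (hc (2 * (r + 1)) (by positivity))
  refine Summable.of_nonneg_of_le (fun n => by positivity) (fun n => ?_) h
  have h1 : ((n : ℝ) + 1) ≤ 2 ^ (n + 1) := by
    exact_mod_cast (Nat.lt_two_pow_self (n := n + 1)).le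
  have h2 : r ^ n ≤ (r + 1) ^ (n + 1) := by
    calc r ^ n ≤ (r + 1) ^ n := by gcongr; linarith
      _ ≤ (r + 1) ^ (n + 1) := pow_le_pow_right₀ (by linarith) (Nat.le_succ n)
  have h3 : |((n : ℝ) + 1)| = (n : ℝ) + 1 := abs_of_nonneg (by positivity)
  calc |_root_.derivCoeff c n| * r ^ n = |c (n + 1)| * (((n : ℝ) + 1) * r ^ n) := by
        rw [_root_.derivCoeff, abs_mul, h3]; ring
    _ ≤ |c (n + 1)| * (2 ^ (n + 1) * (r + 1) ^ (n + 1)) := by gcongr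
    _ = |c (n + 1)| * (2 * (r + 1)) ^ (n + 1) := by rw [mul_pow]

/-- Multiplying the derived series by `z` gives the series with coefficients `n c_n`. -/
lemma EntireCoeff.hasSum_euler {c : ℕ → ℝ} (hc : EntireCoeff c) (z : ℝ) :
    HasSum (fun n : ℕ => (n : ℝ) * c n * z ^ n) (z * powerSum (_root_.derivCoeff c) z) := by
  rw [← hasSum_nat_add_iff' 1]
  simp only [Finset.range_one, Finset.sum_singleton, Nat.cast_zero, zero_mul, sub_zero]
  refine ((hc.derivCoeff.hasSum z).mul_left z).congr_fun ?_
  intro n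
  simp only [_root_.derivCoeff]
  push_cast
  ring

lemma hasDerivAt_entire {c : ℕ → ℝ} (hc : EntireCoeff c) (z : ℝ) :
    HasDerivAt (powerSum c) (powerSum (derivCoeff c) z) z := by
  set R : ℝ := |z| + 1 with hR
  have hz : z ∈ Metric.ball (0 : ℝ) R := by simp [hR]
  have hu : Summable fun n : ℕ => (n : ℝ) * |c n| * R ^ (n - 1) := by
    rw [← summable_nat_add_iff 1]
    refine (hc.derivCoeff R (by positivity)).congr ?_
    intro n
    have h3 : |((n : ℝ) + 1)| = (n : ℝ) + 1 := abs_of_nonneg (by positivity)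
    simp [derivCoeff, abs_mul, h3]
  have key := hasDerivAt_tsum_of_isPreconnected (g := fun n y => c n * y ^ n)
    (g' := fun n y => c n * (n * y ^ (n - 1))) hu Metric.isOpen_ball
    (convex_ball (0 : ℝ) R).isPreconnected
    (fun n y _ => (hasDerivAt_pow n y).const_mul (c n))
    (fun n y hy => by
      have hy' : |y| ≤ R := by simpa using (Metric.mem_ball.1 hy).le
      rw [Real.norm_eq_abs, abs_mul, abs_mul, abs_pow, Nat.abs_cast]
      calc |c n| * (n * |y| ^ (n - 1)) ≤ |c n| * (n * R ^ (n - 1)) := by gcongr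
        _ = n * |c n| * R ^ (n - 1) := by ring)
    hz (hc.hasSum z).summable hz
  have hs : HasSum (fun n : ℕ => c n * (n * z ^ (n - 1))) (powerSum (derivCoeff c) z) := by
    rw [← hasSum_nat_add_iff' 1]
    simp only [Finset.range_one, Finset.sum_singleton, Nat.cast_zero, zero_mul, mul_zero, sub_zero]
    refine (hc.derivCoeff.hasSum z).congr_fun ?_
    intro n
    simp only [derivCoeff, Nat.add_sub_cancel]
    push_cast
    ring
  rw [hs.tsum_eq] at key
  exact key

/-! ### Kummer's equation -/

/-- The Taylor coefficients of `M(a,b,·)`. -/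
noncomputable def kummerCoeff (a b : ℝ) (n : ℕ) : ℝ :=
  (ascPochhammer ℝ n).eval a / (ascPochhammer ℝ n).eval b / (n.factorial : ℝ)

lemma kummerM_eq (a b : ℝ) : kummerM a b = powerSum (kummerCoeff a b) := by
  funext z
  unfold kummerM powerSum kummerCoeff
  congr 1
  funext n
  ring

lemma kummerCoeff_succ (a : ℝ) {b : ℝ} (hb : 0 < b) (n : ℕ) :
    (b + n) * derivCoeff (kummerCoeff a b) n = (a + n) * kummerCoeff a b n := by
  have h1 : (ascPochhammer ℝ n).eval b ≠ 0 := (ascPochhammer_pos n b hb).ne'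
  have h2 : b + n ≠ 0 := by positivity
  have h3 : (n.factorial : ℝ) ≠ 0 := by positivity
  have h4 : (n : ℝ) + 1 ≠ 0 := by positivity
  simp only [derivCoeff, kummerCoeff, ascPochhammer_succ_eval, Nat.factorial_succ]
  push_cast
  field_simp

lemma entireCoeff_kummer (a : ℝ) {b : ℝ} (hb : 0 < b) : EntireCoeff (kummerCoeff a b) := by
  intro r hr
  refine summable_of_ratio_norm_eventually_le (r := 1 / 2) (by norm_num) ?_
  -- For `n ≥ |a| + 4 r + 1` the ratio of consecutive terms is at most `2 r / (n + 1) ≤ 1 / 2`.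
  obtain ⟨N, hN⟩ := exists_nat_ge (|a| + 4 * r + 1)
  filter_upwards [Filter.eventually_ge_atTop N] with n hn
  have hn' : (N : ℝ) ≤ n := by exact_mod_cast hn
  have hrec := congrArg abs (kummerCoeff_succ a hb n)
  have ha0 := abs_nonneg a
  have hbn : 0 < b + n := by positivity
  have hn0 : (0 : ℝ) < (n : ℝ) + 1 := by positivity
  simp only [derivCoeff, abs_mul, abs_of_pos hbn, abs_of_pos hn0] at hrec
  have han : |a + n| ≤ 2 * (b + n) := by
    have := abs_add_le a n
    rw [Nat.abs_cast] at this
    linarith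
  have h1 : ((n : ℝ) + 1) * |kummerCoeff a b (n + 1)| ≤ 2 * |kummerCoeff a b n| := by
    refine le_of_mul_le_mul_left ?_ hbn
    rw [hrec]
    nlinarith [mul_le_mul_of_nonneg_right han (abs_nonneg (kummerCoeff a b n))]
  have h2 : r * |kummerCoeff a b (n + 1)| ≤ 1 / 2 * |kummerCoeff a b n| := by
    have : 4 * r * |kummerCoeff a b (n + 1)| ≤ ((n : ℝ) + 1) * |kummerCoeff a b (n + 1)| := by
      gcongr
      linarith
    linarith
  rw [Real.norm_eq_abs, Real.norm_eq_abs, abs_mul, abs_mul, abs_abs, abs_abs,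
    abs_of_nonneg (pow_nonneg hr _), abs_of_nonneg (pow_nonneg hr _), pow_succ]
  nlinarith [mul_le_mul_of_nonneg_right h2 (pow_nonneg hr n)]

lemma kummer_ode (a : ℝ) {b : ℝ} (hb : 0 < b) (z : ℝ) :
    z * powerSum (derivCoeff (derivCoeff (kummerCoeff a b))) z
      + (b - z) * powerSum (derivCoeff (kummerCoeff a b)) z
      - a * powerSum (kummerCoeff a b) z = 0 := by
  have hc := entireCoeff_kummer a hb
  have h1 := ((hc.derivCoeff.hasSum z).mul_left b).add (hc.derivCoeff.hasSum_euler z)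
  have h2 := ((hc.hasSum z).mul_left a).add (hc.hasSum_euler z)
  have h3 := h1.unique (h2.congr_fun fun n => by
    linear_combination z ^ n * kummerCoeff_succ a hb n)
  linarith

/-! ### The profile function -/

/-- The profile `z ↦ A e^{-z/2} z^λ M_{λ,η}(z)` is twice differentiable on `z > 0` and solves
the ordinary differential equation to which the parabolic equation reduces. -/
lemma profile_ode (A lam η K : ℝ) (hη : 0 < η) (hK : η ^ 2 = (lam + 1 / 2) ^ 2 + K) :
    ∃ g₁ g₂ : ℝ → ℝ, ∀ z : ℝ, 0 < z →
      HasDerivAt (fun z => A * Real.exp (-z / 2) * z ^ lam * whittakerM lam η z) (g₁ z) z ∧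
      HasDerivAt g₁ (g₂ z) z ∧
      z * g₂ z + (z - 2 * lam) * g₁ z
        - K / z * (A * Real.exp (-z / 2) * z ^ lam * whittakerM lam η z) = 0 := by
  have hb : 0 < 1 + 2 * η := by linarith
  set c := kummerCoeff (η - lam + 1 / 2) (1 + 2 * η) with hcdef
  have hc : EntireCoeff c := entireCoeff_kummer _ hb
  set s : ℝ := lam + η + 1 / 2 with hs
  set M := powerSum c with hM
  set M₁ := powerSum (derivCoeff c) with hM₁
  set M₂ := powerSum (derivCoeff (derivCoeff c)) with hM₂
  have dM : ∀ z, HasDerivAt M (M₁ z) z := hasDerivAt_entire hc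
  have dM₁ : ∀ z, HasDerivAt M₁ (M₂ z) z := hasDerivAt_entire hc.derivCoeff
  have hg : ∀ z : ℝ, 0 < z → A * Real.exp (-z / 2) * z ^ lam * whittakerM lam η z
      = A * (Real.exp (-z) * z ^ s) * M z := by
    intro z hz
    have e1 : Real.exp (-z) = Real.exp (-z / 2) * Real.exp (-z / 2) := by
      rw [← Real.exp_add]; congr 1; ring
    have e2 : z ^ s = z ^ lam * z ^ (η + 1 / 2) := by
      rw [← Real.rpow_add hz]; congr 1; rw [hs]; ring
    rw [whittakerM, kummerM_eq, e1, e2]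
    ring
  have dW : ∀ z : ℝ, 0 < z → HasDerivAt (fun z => Real.exp (-z) * z ^ s)
      (Real.exp (-z) * z ^ s * (s / z - 1)) z := by
    intro z hz
    have h := ((hasDerivAt_neg z).exp).mul (Real.hasDerivAt_rpow_const (p := s) (Or.inl hz.ne'))
    refine h.congr_deriv ?_
    rw [Real.rpow_sub_one hz.ne']
    field_simp
    ring
  refine ⟨fun z => A * (Real.exp (-z) * z ^ s) * ((s / z - 1) * M z + M₁ z),
    fun z => A * (Real.exp (-z) * z ^ s) * ((s / z - 1) * ((s / z - 1) * M z + M₁ z)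
      + (-s / z ^ 2 * M z + (s / z - 1) * M₁ z + M₂ z)), fun z hz => ⟨?_, ?_, ?_⟩⟩
  · have h := ((dW z hz).const_mul A).mul (dM z)
    refine (h.congr_of_eventuallyEq ?_).congr_deriv (by ring)
    filter_upwards [lt_mem_nhds hz] with y hy using hg y hy
  · have hq : HasDerivAt (fun z : ℝ => s / z - 1) (-s / z ^ 2) z := by
      have h := ((hasDerivAt_inv hz.ne').const_mul s).sub_const 1
      refine (h.congr_of_eventuallyEq ?_).congr_deriv (by ring)
      exact Filter.Eventually.of_forall fun y => by simp [div_eq_mul_inv]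
    have h := ((dW z hz).const_mul A).mul ((hq.mul (dM z)).add (dM₁ z))
    refine h.congr_deriv ?_
    simp only [Pi.add_apply, Pi.mul_apply]
    ring
  · rw [hg z hz]
    have hode := kummer_ode (η - lam + 1 / 2) hb z
    rw [← hcdef, ← hM, ← hM₁, ← hM₂] at hode
    have hK' : K = s * (s - 1 - 2 * lam) := by rw [hs]; linear_combination -hK
    have hz' := hz.ne'
    beta_reduce
    generalize Real.exp (-z) * z ^ s = W
    have ha : η = s - lam - 1 / 2 := by rw [hs]; ring
    rw [ha] at hode
    rw [hK']
    clear_value s M M₁ M₂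
    field_simp
    linear_combination A * W * z * hode

/-! ### The parabolic equation -/

theorem stmt_0 (μ ρ k Θ σ T : ℝ) (hσ : 0 < σ) (hk : 0 < k) (hρ : ρ ≠ 0)
    (δ C : ℝ) (hδ : 0 < δ) (hC : 0 < C)
    (lam η : ℝ)
    (hlam : lam = -(k * Θ) / σ ^ 2 + (1 - δ) * μ / (ρ * σ))
    (hη : η = Real.sqrt ((lam + 1/2) ^ 2 + 2 * C / σ ^ 2))
    (Ψ : ℝ → ℝ → ℝ)
    (hΨ : ∀ v t, Ψ v t = 2 * k * v / (σ ^ 2 * (Real.exp (k * (T - t)) - 1)))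
    (f : ℝ → ℝ → ℝ)
    (hf : ∀ v t, f v t =
      Real.Gamma (η - lam + 1/2) / Real.Gamma (2 * η + 1) *
        Real.exp (-(Ψ v t) / 2) * (Ψ v t) ^ lam * whittakerM lam η (Ψ v t)) :
    ∀ v t, 0 < v → t < T →
      σ ^ 2 * v / 2 * deriv (fun v' => deriv (fun v'' => f v'' t) v') v +
        (k * Θ - (1 - δ) * μ * σ / ρ - k * v) * deriv (fun v' => f v' t) v -
        C / v * f v t + deriv (fun t' => f v t') t = 0 := by
  intro v t hv ht
  have hpos : 0 < (lam + 1/2) ^ 2 + 2 * C / σ ^ 2 := by positivity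
  have hη0 : 0 < η := by rw [hη]; exact Real.sqrt_pos.2 hpos
  have hη2 : η ^ 2 = (lam + 1/2) ^ 2 + 2 * C / σ ^ 2 := by rw [hη]; exact Real.sq_sqrt hpos.le
  obtain ⟨g₁, g₂, hg⟩ := profile_ode
    (Real.Gamma (η - lam + 1/2) / Real.Gamma (2 * η + 1)) lam η _ hη0 hη2
  set g : ℝ → ℝ := fun z => Real.Gamma (η - lam + 1/2) / Real.Gamma (2 * η + 1) *
    Real.exp (-z / 2) * z ^ lam * whittakerM lam η z with hgdef
  have hfg : ∀ v t, f v t = g (Ψ v t) := fun v t => hf v t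
  have hE : 0 < Real.exp (k * (T - t)) - 1 := by
    have : 0 < k * (T - t) := mul_pos hk (sub_pos.2 ht)
    linarith [Real.one_lt_exp_iff.2 this]
  set E := Real.exp (k * (T - t)) with hEdef
  set c : ℝ := 2 * k / (σ ^ 2 * (E - 1)) with hc
  have hc0 : 0 < c := by positivity
  have hΨc : ∀ v, Ψ v t = c * v := fun v => by rw [hΨ, hc]; ring
  have dfv : ∀ y, 0 < y → HasDerivAt (fun y => f y t) (c * g₁ (c * y)) y := by
    intro y hy
    have hl : HasDerivAt (fun y => c * y) c y := by simpa using (hasDerivAt_id y).const_mul c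
    have h := HasDerivAt.comp y (hg (c * y) (by positivity)).1 hl
    have he : (fun y => f y t) = g ∘ fun y => c * y := by
      funext y; simp [hfg, hΨc]
    rw [he]
    exact h.congr_deriv (mul_comm _ _)
  have dfvv : HasDerivAt (fun y => deriv (fun v'' => f v'' t) y) (c * (c * g₂ (c * v))) v := by
    have hl : HasDerivAt (fun y => c * y) c v := by simpa using (hasDerivAt_id v).const_mul c
    have h := (HasDerivAt.comp v (hg (c * v) (by positivity)).2.1 hl).const_mul c
    refine (h.congr_of_eventuallyEq ?_).congr_deriv (by ring)
    filter_upwards [lt_mem_nhds hv] with y hy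
    rw [(dfv y hy).deriv]
    rfl
  -- The time derivative of `Ψ` is `Ψ (k + σ² c / 2)`.
  have dΨ : HasDerivAt (fun t' => Ψ v t') (c * v * (k + σ ^ 2 * c / 2)) t := by
    have he : (fun t' => Ψ v t') =
        fun t' => 2 * k * v / (σ ^ 2 * (Real.exp (k * (T - t')) - 1)) := funext fun t' => hΨ v t'
    rw [he]
    have h1 : HasDerivAt (fun t' => k * (T - t')) (-k) t := by
      simpa using ((hasDerivAt_id t).const_sub T).const_mul k
    have h2 := ((h1.exp.sub_const 1).const_mul (σ ^ 2))
    have h3 := (hasDerivAt_const t (2 * k * v)).div h2 (by positivity)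
    refine h3.congr_deriv ?_
    rw [← hEdef, hc]
    have := hE.ne'
    field_simp
    ring
  have dft : HasDerivAt (fun t' => f v t') (g₁ (c * v) * (c * v * (k + σ ^ 2 * c / 2))) t := by
    have hgz := (hg (c * v) (by positivity)).1
    rw [← hΨc] at hgz
    have h := HasDerivAt.comp t hgz dΨ
    have he : (fun t' => f v t') = g ∘ fun t' => Ψ v t' := by
      funext t'; simp [hfg]
    rw [he, ← hΨc v]
    rw [← hΨc v] at h
    exact h
  rw [dfvv.deriv, (dfv v hv).deriv, dft.deriv, hfg, hΨc]
  have hode := (hg (c * v) (by positivity)).2.2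
  have hdrift : k * Θ - (1 - δ) * μ * σ / ρ = -σ ^ 2 * lam := by
    rw [hlam]; field_simp; ring
  rw [hdrift]
  change c * v * g₂ (c * v) + (c * v - 2 * lam) * g₁ (c * v)
    - 2 * C / σ ^ 2 / (c * v) * g (c * v) = 0 at hode
  generalize g (c * v) = G at *
  have hpot : σ ^ 2 * c / 2 * (2 * C / σ ^ 2 / (c * v) * G) = C / v * G := by
    field_simp
  linear_combination σ ^ 2 * c / 2 * hode + hpot
end

section
/- For every fixed v > 0, the function f(v,t) = (Γ(η−λ+1/2)/Γ(2η+1)) · e^{−Ψ(v,t)/2} · Ψ(v,t)^λ · M_{λ,η}(Ψ(v,t)) tends to 1 as t tends to T from the left; that is, the terminal boundary condition f(v,T) = 1 holds in the limit sense. -/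
open MeasureTheory Set Filter Topology

lemma Gamma_mul_ascPochhammer {a : ℝ} (ha : 0 < a) (n : ℕ) :
    Real.Gamma a * (ascPochhammer ℝ n).eval a = Real.Gamma (a + n) := by
  induction n with
  | zero => simp
  | succ n ih =>
    have h : a + n ≠ 0 := by positivity
    rw [ascPochhammer_succ_eval, ← mul_assoc, ih, Nat.cast_succ, ← add_assoc,
      Real.Gamma_add_one h, mul_comm]

lemma real_beta_integrand {p q x : ℝ} (hx : x ∈ Ioo (0 : ℝ) 1) :
    (x : ℂ) ^ ((p : ℂ) - 1) * (1 - (x : ℂ)) ^ ((q : ℂ) - 1)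
      = ((x ^ (p - 1) * (1 - x) ^ (q - 1) : ℝ) : ℂ) := by
  rw [Complex.ofReal_mul, Complex.ofReal_cpow hx.1.le, Complex.ofReal_cpow (sub_pos.2 hx.2).le]
  push_cast
  rfl

lemma real_beta_integrable {p q : ℝ} (hp : 0 < p) (hq : 0 < q) :
    IntegrableOn (fun x : ℝ => x ^ (p - 1) * (1 - x) ^ (q - 1)) (Ioo 0 1) := by
  have h := Complex.betaIntegral_convergent (u := p) (v := q) (by simpa) (by simpa)
  rw [intervalIntegrable_iff_integrableOn_Ioo_of_le zero_le_one] at h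
  have h2 := (integrableOn_congr_fun (fun x hx => real_beta_integrand hx) measurableSet_Ioo).1 h
  exact h2.re

lemma real_beta_integral {p q : ℝ} (hp : 0 < p) (hq : 0 < q) :
    ∫ x in Ioo (0 : ℝ) 1, x ^ (p - 1) * (1 - x) ^ (q - 1)
      = Real.Gamma p * Real.Gamma q / Real.Gamma (p + q) := by
  have h := Complex.betaIntegral_eq_Gamma_mul_div p q (by simpa) (by simpa)
  rw [Complex.betaIntegral, intervalIntegral.integral_of_le zero_le_one,
    integral_Ioc_eq_integral_Ioo,
    setIntegral_congr_fun measurableSet_Ioo (fun x hx => real_beta_integrand hx),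
    integral_complex_ofReal, ← Complex.ofReal_add, Complex.Gamma_ofReal, Complex.Gamma_ofReal,
    Complex.Gamma_ofReal] at h
  exact_mod_cast h

/-- Euler's integral for the Kummer function, with the integration variable reflected. -/
lemma kummerM_integral {a c z : ℝ} (ha : 0 < a) (hc : 0 < c) (hz : 0 ≤ z) :
    Real.Gamma a / Real.Gamma (a + c) * kummerM a (a + c) z * Real.Gamma c
      = ∫ x in Ioo (0 : ℝ) 1, x ^ (c - 1) * (1 - x) ^ (a - 1) * Real.exp (z * (1 - x)) := by
  set F : ℕ → ℝ → ℝ := fun n x =>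
    z ^ n / (n.factorial : ℝ) * (x ^ (c - 1) * (1 - x) ^ (a + n - 1)) with hF
  have hFint : ∀ n, Integrable (F n) (volume.restrict (Ioo 0 1)) := fun n =>
    (real_beta_integrable hc (by positivity : 0 < a + n)).const_mul _
  have hbeta : ∀ n : ℕ, ∫ x in Ioo (0 : ℝ) 1, F n x
      = Real.Gamma a / Real.Gamma (a + c) * ((((ascPochhammer ℝ n).eval a /
        (ascPochhammer ℝ n).eval (a + c)) * z ^ n / (n.factorial : ℝ))) * Real.Gamma c := by
    intro n
    have h1 := Gamma_mul_ascPochhammer ha n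
    have h2 := Gamma_mul_ascPochhammer (add_pos ha hc) n
    have e : c + (a + n) = a + c + n := by ring
    rw [hF, integral_const_mul, real_beta_integral hc (by positivity), e, ← h1, ← h2]
    have := (Real.Gamma_pos_of_pos (add_pos ha hc)).ne'
    have := (ascPochhammer_pos n (a + c) (add_pos ha hc)).ne'
    field_simp
  have hFnn : ∀ n, ∀ x ∈ Ioo (0 : ℝ) 1, 0 ≤ F n x := by
    intro n x hx
    have := hx.1
    have := sub_pos.2 hx.2
    simp only [hF]
    positivity
  have hnorm : ∀ n, ∫ x in Ioo (0 : ℝ) 1, ‖F n x‖ = ∫ x in Ioo (0 : ℝ) 1, F n x := fun n =>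
    setIntegral_congr_fun measurableSet_Ioo fun x hx => Real.norm_of_nonneg (hFnn n x hx)
  have hsum : Summable fun n => ∫ x in Ioo (0 : ℝ) 1, ‖F n x‖ := by
    -- `(1-x)^(a+n-1) ≤ (1-x)^(a-1)` bounds the norms by the terms of a multiple of `exp z`
    refine Summable.of_nonneg_of_le (fun n => integral_nonneg fun x => norm_nonneg _) (fun n => ?_)
      ((Real.summable_pow_div_factorial z).mul_right
        (∫ x in Ioo (0 : ℝ) 1, x ^ (c - 1) * (1 - x) ^ (a - 1)))
    rw [hnorm, hF, integral_const_mul]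
    refine mul_le_mul_of_nonneg_left ?_ (by positivity)
    refine setIntegral_mono_on (real_beta_integrable hc (by positivity))
      (real_beta_integrable hc ha) measurableSet_Ioo fun x hx => ?_
    have := hx.1
    have := sub_pos.2 hx.2
    refine mul_le_mul_of_nonneg_left ?_ (by positivity)
    exact Real.rpow_le_rpow_of_exponent_ge this (by linarith [hx.1])
      (by linarith [(Nat.cast_nonneg n : (0 : ℝ) ≤ n)])
  have hs := (hasSum_integral_of_summable_integral_norm hFint hsum).tsum_eq
  simp_rw [hbeta] at hs
  rw [tsum_mul_right, tsum_mul_left] at hs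
  rw [kummerM, hs]
  refine setIntegral_congr_fun measurableSet_Ioo fun x hx => ?_
  have hx1 := sub_pos.2 hx.2
  have hterm : ∀ n, F n x
      = x ^ (c - 1) * (1 - x) ^ (a - 1) * ((z * (1 - x)) ^ n / (n.factorial : ℝ)) := by
    intro n
    have e : a + n - 1 = a - 1 + n := by ring
    simp only [hF]
    rw [e, Real.rpow_add hx1, Real.rpow_natCast, mul_pow]
    ring
  simp only [hterm]
  rw [tsum_mul_left, Real.exp_eq_exp_ℝ, NormedSpace.exp_eq_tsum_div]

/-- Euler's integral after the substitution `s = z * x`. -/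
lemma kummerM_scaled {a c z : ℝ} (ha : 0 < a) (hc : 0 < c) (hz : 0 < z) :
    Real.Gamma a / Real.Gamma (a + c) * (Real.exp (-z) * z ^ c * kummerM a (a + c) z)
      = (Real.Gamma c)⁻¹ *
        ∫ s in Ioc 0 z, Real.exp (-s) * s ^ (c - 1) * (1 - s / z) ^ (a - 1) := by
  have hG := (Real.Gamma_pos_of_pos hc).ne'
  have key := kummerM_integral ha hc hz.le
  rw [eq_inv_mul_iff_mul_eq₀ hG, ← intervalIntegral.integral_of_le hz.le]
  have hs := intervalIntegral.smul_integral_comp_mul_left (a := 0) (b := 1)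
    (fun s => Real.exp (-s) * s ^ (c - 1) * (1 - s / z) ^ (a - 1)) z
  rw [mul_zero, mul_one] at hs
  rw [← hs, intervalIntegral.integral_of_le zero_le_one, integral_Ioc_eq_integral_Ioo, smul_eq_mul,
    ← integral_const_mul]
  calc _ = Real.exp (-z) * z ^ c *
        (Real.Gamma a / Real.Gamma (a + c) * kummerM a (a + c) z * Real.Gamma c) := by ring
    _ = _ := by
      rw [key, ← integral_const_mul]
      refine setIntegral_congr_fun measurableSet_Ioo fun x hx => ?_
      have e1 : Real.exp (-z) * Real.exp (z * (1 - x)) = Real.exp (-(z * x)) := by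
        rw [← Real.exp_add]; ring_nf
      have e2 : z * z ^ (c - 1) = z ^ c := by
        rw [Real.rpow_sub_one hz.ne']; field_simp
      have e3 : z * x / z = x := by field_simp
      rw [e3, Real.mul_rpow hz.le hx.1.le, ← e1, ← e2]
      ring

/-- Dominated convergence on `(0, ∞)`: for `a ≥ 1` the factor `(1 - s/z)^(a-1)` lies in `[0, 1]`
on `(0, z]` and tends to `1`. -/
lemma tendsto_truncated_Gamma {a c : ℝ} (ha : 1 ≤ a) (hc : 0 < c) :
    Tendsto (fun z : ℝ => ∫ s in Ioc 0 z, Real.exp (-s) * s ^ (c - 1) * (1 - s / z) ^ (a - 1))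
      atTop (𝓝 (Real.Gamma c)) := by
  rw [Real.Gamma_eq_integral hc]
  have hconv : ∀ z : ℝ, ∫ s in Ioc 0 z, Real.exp (-s) * s ^ (c - 1) * (1 - s / z) ^ (a - 1)
      = ∫ s in Ioi (0 : ℝ), (Ioc 0 z).indicator
        (fun s => Real.exp (-s) * s ^ (c - 1) * (1 - s / z) ^ (a - 1)) s := by
    intro z
    rw [integral_indicator measurableSet_Ioc,
      Measure.restrict_restrict_of_subset Ioc_subset_Ioi_self]
  simp_rw [hconv]
  refine tendsto_integral_filter_of_dominated_convergence
    (fun s => Real.exp (-s) * s ^ (c - 1)) ?_ ?_ (Real.GammaIntegral_convergent hc) ?_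
  · refine Eventually.of_forall fun z => Measurable.aestronglyMeasurable ?_
    exact Measurable.indicator (by fun_prop) measurableSet_Ioc
  · refine Eventually.of_forall fun z => (ae_restrict_iff' measurableSet_Ioi).2 (ae_of_all _ ?_)
    intro s hs
    have hs0 : 0 < s := hs
    by_cases h : s ∈ Ioc 0 z
    · rw [indicator_of_mem h]
      have hz : 0 < z := h.1.trans_le h.2
      have h1 : 0 ≤ 1 - s / z := sub_nonneg.2 ((div_le_one hz).2 h.2)
      have h2 : 1 - s / z ≤ 1 := by linarith [div_pos hs0 hz]
      rw [Real.norm_of_nonneg (by positivity)]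
      exact mul_le_of_le_one_right (by positivity) (Real.rpow_le_one h1 h2 (by linarith))
    · rw [indicator_of_notMem h, norm_zero]
      positivity
  · refine (ae_restrict_iff' measurableSet_Ioi).2 (ae_of_all _ fun s hs => ?_)
    have hlim : Tendsto (fun z : ℝ => Real.exp (-s) * s ^ (c - 1) * (1 - s / z) ^ (a - 1))
        atTop (𝓝 (Real.exp (-s) * s ^ (c - 1) * (1 - 0) ^ (a - 1))) :=
      (((tendsto_const_nhds.div_atTop tendsto_id).const_sub 1).rpow_const
        (Or.inr (by linarith))).const_mul _
    rw [sub_zero, Real.one_rpow, mul_one] at hlim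
    refine hlim.congr' ?_
    filter_upwards [eventually_ge_atTop s] with z hz
    rw [indicator_of_mem (show s ∈ Ioc 0 z from ⟨hs, hz⟩)]

/-- Leading asymptotics `M(a, b, z) ~ Γ(b)/Γ(a) e^z z^{a-b}` at `+∞`, where `b = a + c`. -/
lemma tendsto_kummerM {a c : ℝ} (ha : 1 ≤ a) (hc : 0 < c) :
    Tendsto (fun z : ℝ => Real.Gamma a / Real.Gamma (a + c) *
      (Real.exp (-z) * z ^ c * kummerM a (a + c) z)) atTop (𝓝 1) := by
  have h := (tendsto_truncated_Gamma ha hc).const_mul (Real.Gamma c)⁻¹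
  rw [inv_mul_cancel₀ (Real.Gamma_pos_of_pos hc).ne'] at h
  refine h.congr' ?_
  filter_upwards [eventually_gt_atTop 0] with z hz
  exact (kummerM_scaled (by linarith) hc hz).symm

theorem stmt_1 (μ ρ k Θ σ T : ℝ) (hσ : 0 < σ) (hk : 0 < k) (hρ : ρ ≠ 0)
    (δ C : ℝ) (hδ : 0 < δ) (hC : 0 < C)
    (lam η : ℝ)
    (hlam : lam = -(k * Θ) / σ ^ 2 + (1 - δ) * μ / (ρ * σ))
    (hη : η = Real.sqrt ((lam + 1/2) ^ 2 + 2 * C / σ ^ 2))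
    (Ψ : ℝ → ℝ → ℝ)
    (hΨ : ∀ v t, Ψ v t = 2 * k * v / (σ ^ 2 * (Real.exp (k * (T - t)) - 1)))
    (f : ℝ → ℝ → ℝ)
    (hf : ∀ v t, f v t =
      Real.Gamma (η - lam + 1/2) / Real.Gamma (2 * η + 1) *
        Real.exp (-(Ψ v t) / 2) * (Ψ v t) ^ lam * whittakerM lam η (Ψ v t)) :
    ∀ v, 0 < v →
      Filter.Tendsto (fun t => f v t) (nhdsWithin T (Set.Iio T)) (nhds 1) := by
  intro v hv
  have hgt : |lam + 1/2| < η := by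
    rw [hη, ← Real.sqrt_sq_eq_abs]
    exact Real.sqrt_lt_sqrt (sq_nonneg _) (lt_add_of_pos_right _ (by positivity))
  obtain ⟨hlo, hhi⟩ := abs_lt.1 hgt
  have hc : 0 < η + lam + 1/2 := by linarith
  have hb : η - lam + 1/2 + (η + lam + 1/2) = 2 * η + 1 := by ring
  have hΨpos : ∀ t < T, 0 < Ψ v t := by
    intro t ht
    have : 0 < Real.exp (k * (T - t)) - 1 :=
      sub_pos.2 (Real.one_lt_exp_iff.2 (mul_pos hk (sub_pos.2 ht)))
    rw [hΨ]
    positivity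
  have hΨtop : Tendsto (fun t => Ψ v t) (𝓝[<] T) atTop := by
    have hden : Tendsto (fun t => σ ^ 2 * (Real.exp (k * (T - t)) - 1)) (𝓝[<] T) (𝓝[>] 0) := by
      refine tendsto_nhdsWithin_iff.2 ⟨?_, ?_⟩
      · have hcont : Continuous fun t => σ ^ 2 * (Real.exp (k * (T - t)) - 1) := by fun_prop
        have h := hcont.tendsto T
        simp only [sub_self, mul_zero, Real.exp_zero] at h
        exact h.mono_left nhdsWithin_le_nhds
      · filter_upwards [self_mem_nhdsWithin] with t ht
        have : 0 < Real.exp (k * (T - t)) - 1 :=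
          sub_pos.2 (Real.one_lt_exp_iff.2 (mul_pos hk (sub_pos.2 ht)))
        exact mul_pos (by positivity) this
    simp_rw [hΨ, div_eq_mul_inv]
    exact (tendsto_inv_nhdsGT_zero.comp hden).const_mul_atTop (by positivity)
  have hmain := (tendsto_kummerM (a := η - lam + 1/2) (by linarith) hc).comp hΨtop
  refine hmain.congr' ?_
  filter_upwards [self_mem_nhdsWithin] with t ht
  have hz := hΨpos t ht
  have e1 : Real.exp (-(Ψ v t)) = Real.exp (-(Ψ v t) / 2) * Real.exp (-(Ψ v t) / 2) := by
    rw [← Real.exp_add]; ring_nf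
  have e2 : Ψ v t ^ (η + lam + 1/2) = Ψ v t ^ lam * Ψ v t ^ (η + 1/2) := by
    rw [← Real.rpow_add hz]; ring_nf
  rw [Function.comp_apply, hf, whittakerM, hb, e1, e2, add_comm 1 (2 * η)]
  ring
end

section
/- Let h : (0,∞)×(0,∞) → ℝ be twice continuously differentiable, and define f(v,t) = e^{−λ·k(T−t)} · ṽ^λ · e^{ṽ/2} · h(ṽ, k(T−t)) for v > 0 and t < T, where ṽ = 2kv/σ². Then f satisfies (σ²v/2)·∂²f/∂v² + (kΘ − (1−δ)μσ/ρ − kv)·∂f/∂v − (C/v)·f + ∂f/∂t = 0 at every point with v > 0 and t < T if and only if h satisfies ∂²h/∂ṽ² + (−1/4 + (1/4 − η²)/ṽ²)·h = (1/ṽ)·∂h/∂τ̃ at every point with ṽ > 0 and τ̃ > 0. Moreover, the terminal condition f(v,T) = 1 for all v > 0 is equivalent to the initial condition h(ṽ, 0) = ṽ^{−λ}·e^{−ṽ/2} for all ṽ > 0. -/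
/-!
With `x = 2kv/σ²` and `τ = k(T - t)`, the prefactor `g = x ^ λ * e ^ (x/2)` satisfies
`g' = (λ/x + 1/2) g`. Since `kΘ - (1-δ)μσ/ρ = -σ²λ`, the left-hand side of the equation for `f` is
`k * (x ∂ₓₓ - (2λ + x) ∂ₓ - 2C/(σ²x)) f - k ∂_τ f`, and the prefactor is chosen so that the
first-order terms in `h` cancel. What remains, using `η² - 1/4 = λ² + λ + 2C/σ²`, is
`k e^{-λτ} g x` times the defect of the equation for `h`. This factor is positive, and
`(v, t) ↦ (x, τ)` is a bijection from `{v > 0, t < T}` to `{x > 0, τ > 0}`, so the two equations are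
equivalent. The boundary conditions correspond because `g` is invertible for `x > 0`.
-/

/-- First `v`-derivative of the transformed function, with `x = a * v`. -/
lemma hasDerivAt_transform (E a l : ℝ) (ha : 0 < a) (H : ℝ → ℝ) (H1 v : ℝ) (hv : 0 < v)
    (hH : HasDerivAt H H1 (a * v)) :
    HasDerivAt (fun v => E * (a * v) ^ l * Real.exp (a * v / 2) * H (a * v))
      (E * (a * v) ^ l * Real.exp (a * v / 2) *
        (a * ((l / (a * v) + 1 / 2) * H (a * v) + H1))) v := by
  have hx : 0 < a * v := mul_pos ha hv
  have hlin : HasDerivAt (fun v => a * v) a v := by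
    simpa using (hasDerivAt_id v).const_mul a
  have hpow := hlin.rpow_const (p := l) (Or.inl hx.ne')
  have hexp := (hlin.div_const 2).exp
  have hcomp : HasDerivAt (fun v => H (a * v)) (H1 * a) v := hH.comp v hlin
  refine (((hpow.const_mul E).mul hexp).mul hcomp).congr_deriv ?_
  rw [Real.rpow_sub_one hx.ne']
  simp only [Pi.mul_apply]
  field_simp

/-- Second `v`-derivative of the transformed function. It is the first-derivative formula applied
to `a * ((l / x + 1 / 2) * H + H')` in place of `H`. -/
lemma deriv_deriv_transform (E a l : ℝ) (ha : 0 < a) (H : ℝ → ℝ)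
    (hH : ∀ y, 0 < y → DifferentiableAt ℝ H y)
    (hH' : ∀ y, 0 < y → DifferentiableAt ℝ (deriv H) y) (v : ℝ) (hv : 0 < v) :
    deriv (fun v' => deriv (fun v => E * (a * v) ^ l * Real.exp (a * v / 2) * H (a * v)) v') v =
      E * (a * v) ^ l * Real.exp (a * v / 2) * (a ^ 2 *
        (((l / (a * v) + 1 / 2) ^ 2 - l / (a * v) ^ 2) * H (a * v) +
          2 * (l / (a * v) + 1 / 2) * deriv H (a * v) +
          deriv (fun x => deriv H x) (a * v))) := by
  have hx : 0 < a * v := mul_pos ha hv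
  have heq : (fun v' => deriv (fun v => E * (a * v) ^ l * Real.exp (a * v / 2) * H (a * v)) v')
      =ᶠ[nhds v] fun v => E * (a * v) ^ l * Real.exp (a * v / 2) *
        (fun y => a * ((l / y + 1 / 2) * H y + deriv H y)) (a * v) := by
    filter_upwards [lt_mem_nhds hv] with w hw
    exact (hasDerivAt_transform E a l ha H _ w hw (hH _ (mul_pos ha hw)).hasDerivAt).deriv
  rw [heq.deriv_eq]
  have hdiv : HasDerivAt (fun y : ℝ => l / y + 1 / 2) (-l / (a * v) ^ 2) (a * v) := by
    refine (((hasDerivAt_const (a * v) l).div (hasDerivAt_id (a * v)) hx.ne').add_const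
      (1 / 2)).congr_deriv ?_
    simp
  have hnew : HasDerivAt (fun y => a * ((l / y + 1 / 2) * H y + deriv H y)) _ (a * v) :=
    ((hdiv.mul (hH _ hx).hasDerivAt).add (hH' _ hx).hasDerivAt).const_mul a
  rw [(hasDerivAt_transform E a l ha _ _ v hv hnew).deriv]
  field_simp
  ring

/-- `t`-derivative of the transformed function. -/
lemma hasDerivAt_transform_time (l k T P t : ℝ) (K : ℝ → ℝ)
    (hK : DifferentiableAt ℝ K (k * (T - t))) :
    HasDerivAt (fun t => Real.exp (-l * (k * (T - t))) * P * K (k * (T - t)))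
      (Real.exp (-l * (k * (T - t))) * P *
        (k * l * K (k * (T - t)) - k * deriv K (k * (T - t)))) t := by
  have hlin : HasDerivAt (fun t => k * (T - t)) (-k) t := by
    simpa using ((hasDerivAt_id t).const_sub T).const_mul k
  have hcomp : HasDerivAt (fun t => K (k * (T - t))) (deriv K (k * (T - t)) * -k) t :=
    hK.hasDerivAt.comp t hlin
  refine ((((hlin.const_mul (-l)).exp).mul_const P).mul hcomp).congr_deriv ?_
  ring

theorem stmt_5 (μ ρ k Θ σ T : ℝ) (hσ : 0 < σ) (hk : 0 < k) (hρ : ρ ≠ 0)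
    (δ C : ℝ) (hδ : 0 < δ) (hC : 0 < C)
    (lam η : ℝ)
    (hlam : lam = -(k * Θ) / σ ^ 2 + (1 - δ) * μ / (ρ * σ))
    (hη : η = Real.sqrt ((lam + 1/2) ^ 2 + 2 * C / σ ^ 2))
    (h : ℝ → ℝ → ℝ)
    (hh : ContDiffOn ℝ 2 (fun p : ℝ × ℝ => h p.1 p.2) (Set.Ioi 0 ×ˢ Set.Ioi 0))
    (f : ℝ → ℝ → ℝ)
    (hf : ∀ v t, f v t =
      Real.exp (-lam * (k * (T - t))) * (2 * k * v / σ ^ 2) ^ lam *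
        Real.exp ((2 * k * v / σ ^ 2) / 2) * h (2 * k * v / σ ^ 2) (k * (T - t))) :
    ((∀ v t, 0 < v → t < T →
        σ ^ 2 * v / 2 * deriv (fun v' => deriv (fun v'' => f v'' t) v') v +
          (k * Θ - (1 - δ) * μ * σ / ρ - k * v) * deriv (fun v' => f v' t) v -
          C / v * f v t + deriv (fun t' => f v t') t = 0) ↔
      (∀ vt τt, 0 < vt → 0 < τt →
        deriv (fun x => deriv (fun y => h y τt) x) vt +
          (-(1/4) + (1/4 - η ^ 2) / vt ^ 2) * h vt τt =
          (1 / vt) * deriv (fun τ' => h vt τ') τt)) ∧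
    ((∀ v, 0 < v → f v T = 1) ↔
      (∀ vt, 0 < vt → h vt 0 = vt ^ (-lam) * Real.exp (-vt / 2))) := by
  obtain ⟨a, ha_def⟩ : ∃ a, a = 2 * k / σ ^ 2 := ⟨_, rfl⟩
  have ha : 0 < a := by rw [ha_def]; positivity
  have hav : ∀ v, 2 * k * v / σ ^ 2 = a * v := fun v => by rw [ha_def]; ring
  simp only [hav] at hf
  have hη2 : η ^ 2 = (lam + 1/2) ^ 2 + 2 * C / σ ^ 2 := by
    rw [hη, Real.sq_sqrt (by positivity)]
  have hdrift : k * Θ - (1 - δ) * μ * σ / ρ = -(σ ^ 2 * lam) := by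
    rw [hlam]; field_simp; ring
  have hσa : σ ^ 2 = 2 * k / a := by rw [ha_def]; field_simp
  -- Regularity of the partial functions of `h`.
  have hat : ∀ x τ, 0 < x → 0 < τ →
      ContDiffAt ℝ 2 (fun p : ℝ × ℝ => h p.1 p.2) (x, τ) := fun x τ hx hτ =>
    hh.contDiffAt ((isOpen_Ioi.prod isOpen_Ioi).mem_nhds ⟨hx, hτ⟩)
  have hspace : ∀ x τ, 0 < x → 0 < τ → ContDiffAt ℝ 2 (fun y => h y τ) x := fun x τ hx hτ =>
    (hat x τ hx hτ).comp x (contDiffAt_id.prodMk contDiffAt_const)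
  have hspace1 : ∀ τ, 0 < τ → ∀ x, 0 < x → DifferentiableAt ℝ (fun y => h y τ) x :=
    fun τ hτ x hx => (hspace x τ hx hτ).differentiableAt (by norm_num)
  have hspace2 : ∀ τ, 0 < τ → ∀ x, 0 < x → DifferentiableAt ℝ (deriv (fun y => h y τ)) x :=
    fun τ hτ x hx => ((hspace x τ hx hτ).derivWithin (m := 1) (by norm_num)).differentiableAt (by norm_num)
  have htime : ∀ x τ, 0 < x → 0 < τ → DifferentiableAt ℝ (fun s => h x s) τ := fun x τ hx hτ =>
    ((hat x τ hx hτ).comp τ (contDiffAt_const.prodMk contDiffAt_id)).differentiableAt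
      (by norm_num)
  have key : ∀ v t, 0 < v → t < T →
      σ ^ 2 * v / 2 * deriv (fun v' => deriv (fun v'' => f v'' t) v') v +
          (k * Θ - (1 - δ) * μ * σ / ρ - k * v) * deriv (fun v' => f v' t) v -
          C / v * f v t + deriv (fun t' => f v t') t =
        (k * Real.exp (-lam * (k * (T - t))) * (a * v) ^ lam * Real.exp (a * v / 2) * (a * v)) *
          (deriv (fun x => deriv (fun y => h y (k * (T - t))) x) (a * v) +
          (-(1/4) + (1/4 - η ^ 2) / (a * v) ^ 2) * h (a * v) (k * (T - t)) -
          (1 / (a * v)) * deriv (fun τ' => h (a * v) τ') (k * (T - t))) := by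
    intro v t hv ht
    have hτ : 0 < k * (T - t) := mul_pos hk (sub_pos.2 ht)
    have hx : 0 < a * v := mul_pos ha hv
    have d1 := (hasDerivAt_transform (Real.exp (-lam * (k * (T - t)))) a lam ha _ _ v hv
      (hspace1 _ hτ _ hx).hasDerivAt).deriv
    have d2 := deriv_deriv_transform (Real.exp (-lam * (k * (T - t)))) a lam ha _
      (hspace1 _ hτ) (hspace2 _ hτ) v hv
    have d3 := (hasDerivAt_transform_time lam k T ((a * v) ^ lam * Real.exp (a * v / 2)) t _
      (htime _ _ hx hτ)).deriv
    simp only [← mul_assoc] at d1 d2 d3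
    simp only [hf, ← mul_assoc]
    rw [d1, d2, d3, hdrift, hη2, hσa]
    field_simp
    ring
  refine ⟨⟨fun H x τ hx hτ => ?_, fun H v t hv ht => ?_⟩,
    ⟨fun H x hx => ?_, fun H v hv => ?_⟩⟩
  · have hv : 0 < x / a := div_pos hx ha
    have ht : T - τ / k < T := sub_lt_self _ (div_pos hτ hk)
    have e1 : a * (x / a) = x := by field_simp
    have e2 : k * (T - (T - τ / k)) = τ := by field_simp; ring
    have e := (key _ _ hv ht).symm.trans (H _ _ hv ht)
    rw [e1, e2] at e
    have hpos : 0 < k * Real.exp (-lam * τ) * x ^ lam * Real.exp (x / 2) * x := by positivity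
    exact sub_eq_zero.1 ((mul_eq_zero.1 e).resolve_left hpos.ne')
  · rw [key v t hv ht, H _ _ (mul_pos ha hv) (mul_pos hk (sub_pos.2 ht)), sub_self, mul_zero]
  · have e := H (x / a) (div_pos hx ha)
    have e1 : a * (x / a) = x := by field_simp
    rw [hf, e1] at e
    simp only [sub_self, mul_zero, Real.exp_zero, one_mul] at e
    rw [Real.rpow_neg hx.le, neg_div, Real.exp_neg, ← mul_inv]
    exact eq_inv_of_mul_eq_one_right e
  · have hx : 0 < a * v := mul_pos ha hv
    rw [hf]
    simp only [sub_self, mul_zero, Real.exp_zero, one_mul]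
    rw [H _ hx, Real.rpow_neg hx.le, neg_div, Real.exp_neg, ← mul_inv]
    exact mul_inv_cancel₀ (by positivity)
end

section
/- Suppose f : (0,∞)×(−∞,T) → ℝ is twice continuously differentiable and satisfies (σ²v/2)·∂²f/∂v² + (kΘ − (1−δ)μσ/ρ − kv)·∂f/∂v − (C/v)·f + ∂f/∂t = 0 for all v > 0 and t < T, and suppose λ ≠ −1. Define g(r,t) = f(C/r, t) for r > 0 and t < T. Then g satisfies (b²r³/2)·∂²g/∂r² + h·r·(m − r)·∂g/∂r − r·g + ∂g/∂t = 0 for all r > 0 and t < T, where b = σ/√C, h = −σ²(1+λ)/C, and m = −kC/(σ²(1+λ)). -/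
/-!
The substitution `v = C / r` turns one equation into the other. With `v = C / r` the chain rule gives
`∂g/∂r = -(C / r²) ∂f/∂v` and `∂²g/∂r² = (2C / r³) ∂f/∂v + (C² / r⁴) ∂²f/∂v²`. The second-order
term of the target is then `(σ² v / 2) ∂²f/∂v² + σ² ∂f/∂v`, and since `h m = k` and
`h C = -σ² (1 + λ)` the drift term is `(-k v - σ² (1 + λ)) ∂f/∂v`. The two contributions to
`∂f/∂v` add up to `-k v - σ² λ = kΘ - (1 - δ) μ σ / ρ - k v`, the drift coefficient of `f`.
-/

theorem hasDerivAt_comp_const_div {F : ℝ → ℝ} {C r : ℝ} (hr : r ≠ 0)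
    (hF : DifferentiableAt ℝ F (C / r)) :
    HasDerivAt (fun x => F (C / x)) (-(C / r ^ 2) * deriv F (C / r)) r := by
  have hdiv : HasDerivAt (fun x : ℝ => C / x) (-(C / r ^ 2)) r := by
    have h := (hasDerivAt_inv hr).const_mul C
    simpa [div_eq_mul_inv] using h
  have h := HasDerivAt.comp r hF.hasDerivAt hdiv
  rw [mul_comm] at h
  exact h

theorem deriv_deriv_comp_const_div {F : ℝ → ℝ} {C r : ℝ} (hC : 0 < C) (hr : 0 < r)
    (hF : ∀ v, 0 < v → DifferentiableAt ℝ F v) (hF' : DifferentiableAt ℝ (deriv F) (C / r)) :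
    deriv (fun x => deriv (fun y => F (C / y)) x) r =
      2 * C / r ^ 3 * deriv F (C / r) + C ^ 2 / r ^ 4 * deriv (deriv F) (C / r) := by
  have hev : (fun x => deriv (fun y => F (C / y)) x) =ᶠ[nhds r]
      fun x => -(C / x ^ 2) * deriv F (C / x) := by
    filter_upwards [lt_mem_nhds hr] with x hx
    exact (hasDerivAt_comp_const_div hx.ne' (hF _ (div_pos hC hx))).deriv
  have hr0 : r ≠ 0 := hr.ne'
  have hcoef : HasDerivAt (fun x : ℝ => -(C / x ^ 2)) (2 * C / r ^ 3) r := by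
    have h := ((hasDerivAt_const r C).div (hasDerivAt_pow 2 r) (pow_ne_zero 2 hr0)).neg
    refine h.congr_deriv ?_
    push_cast
    field_simp
    ring
  rw [hev.deriv_eq]
  refine ((hcoef.mul (hasDerivAt_comp_const_div hr0 hF')).congr_deriv ?_).deriv
  field_simp

theorem stmt_7 (μ ρ k Θ σ T : ℝ) (hσ : 0 < σ) (hk : 0 < k) (hρ : ρ ≠ 0)
    (δ C : ℝ) (hδ : 0 < δ) (hC : 0 < C)
    (lam : ℝ)
    (hlam : lam = -(k * Θ) / σ ^ 2 + (1 - δ) * μ / (ρ * σ))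
    (hlam1 : lam ≠ -1)
    (f : ℝ → ℝ → ℝ)
    (hf : ContDiffOn ℝ 2 (fun p : ℝ × ℝ => f p.1 p.2) (Set.Ioi 0 ×ˢ Set.Iio T))
    (hpde : ∀ v t, 0 < v → t < T →
      σ ^ 2 * v / 2 * deriv (fun v' => deriv (fun v'' => f v'' t) v') v +
        (k * Θ - (1 - δ) * μ * σ / ρ - k * v) * deriv (fun v' => f v' t) v -
        C / v * f v t + deriv (fun t' => f v t') t = 0)
    (g : ℝ → ℝ → ℝ)
    (hg : ∀ r t, g r t = f (C / r) t)
    (b h m : ℝ)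
    (hb : b = σ / Real.sqrt C)
    (hh : h = -(σ ^ 2 * (1 + lam)) / C)
    (hm : m = -(k * C) / (σ ^ 2 * (1 + lam))) :
    ∀ r t, 0 < r → t < T →
      b ^ 2 * r ^ 3 / 2 * deriv (fun r' => deriv (fun r'' => g r'' t) r') r +
        h * r * (m - r) * deriv (fun r' => g r' t) r -
        r * g r t + deriv (fun t' => g r t') t = 0 := by
  intro r t hr ht
  have hslice : ContDiffOn ℝ 2 (fun v => f v t) (Set.Ioi 0) :=
    hf.comp (f := fun v : ℝ => (v, t)) (by fun_prop) fun v hv => ⟨hv, ht⟩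
  have hF : ∀ v, 0 < v → DifferentiableAt ℝ (fun v => f v t) v := fun v hv =>
    (hslice.differentiableOn (by norm_num)).differentiableAt (Ioi_mem_nhds hv)
  have hv : 0 < C / r := div_pos hC hr
  have hF' : DifferentiableAt ℝ (deriv fun v => f v t) (C / r) :=
    ((hslice.deriv_of_isOpen (m := 1) isOpen_Ioi (by norm_num)).differentiableOn
      (by norm_num)).differentiableAt (Ioi_mem_nhds hv)
  have h1 := (hasDerivAt_comp_const_div hr.ne' (hF _ hv)).deriv
  have h2 := deriv_deriv_comp_const_div hC hr hF hF'
  have hp := hpde (C / r) t hv ht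
  simp only [hg]
  rw [h1, h2]
  have hb2 : b ^ 2 = σ ^ 2 / C := by rw [hb, div_pow, Real.sq_sqrt hC.le]
  have h1lam : 1 + lam ≠ 0 := fun h0 => hlam1 (by linarith)
  have hhm : h * m = k := by
    rw [hh, hm]
    field_simp
  have hhC : h * C = -(σ ^ 2 * (1 + lam)) := by
    rw [hh]
    field_simp
  have hsl : σ ^ 2 * lam = -(k * Θ) + (1 - δ) * μ * σ / ρ := by
    rw [hlam]
    field_simp
  have hCr : C / (C / r) = r := by field_simp
  rw [hCr] at hp
  rw [hb2]
  change σ ^ 2 * (C / r) / 2 * deriv (deriv fun v => f v t) (C / r) + _ - _ + _ = 0 at hp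
  rw [← hp]
  generalize deriv (deriv fun v => f v t) (C / r) = f2
  generalize deriv (fun v => f v t) (C / r) = f1
  have e2 : σ ^ 2 / C * r ^ 3 / 2 * (2 * C / r ^ 3 * f1 + C ^ 2 / r ^ 4 * f2) =
      σ ^ 2 * f1 + σ ^ 2 * (C / r) / 2 * f2 := by
    field_simp
  have e1 : h * r * (m - r) * (-(C / r ^ 2) * f1) = (-(h * m) * (C / r) + h * C) * f1 := by
    field_simp
    ring
  rw [e2, e1, hhm, hhC]
  linear_combination (-f1) * hsl
end

section
/- Let γ < 0, δ = 1 + ρ²γ/(1−γ), and C = −(γ/(1−γ))·(μ²/2)·δ. Define J(w,v,t) = (w^γ/γ)·f(v,t)^{1/δ} for w > 0, v > 0, t < T, where f is the explicit Whittaker-function solution. Then for every w > 0, x > 0, v > 0, and t < T, the Hamilton–Jacobi–Bellman equation holds: ∂J/∂t + (σ²v/2)·∂²J/∂v² + k(Θ−v)·∂J/∂v + sup_{a∈ℝ} [ a·μ·x·∂J/∂w + (a²x²v/2)·∂²J/∂w² + ρσv·a·x·∂²J/∂w∂v ] = 0, and the supremum is attained at a* = (w/(x(1−γ))) · ( μ/v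 + (ρσ/δ)·((η+λ+1/2)/v)·M_{λ+1,η}(Ψ(v,t))/M_{λ,η}(Ψ(v,t)) ). -/
/-! ### Kummer's function -/

/-- The `n`-th Taylor coefficient `(a)_n / ((b)_n n!)` of Kummer's function. -/
noncomputable def kcoef (a b : ℝ) (n : ℕ) : ℝ :=
  (ascPochhammer ℝ n).eval a / (ascPochhammer ℝ n).eval b / (n.factorial : ℝ)

lemma hasSum_of_eq {u u' : ℕ → ℝ} {s : ℝ} (h : HasSum u s) (e : ∀ n, u n = u' n) :
    HasSum u' s := by
  rwa [← funext e]

lemma kcoef_zero (a b : ℝ) : kcoef a b 0 = 1 := by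
  simp [kcoef]

lemma kcoef_pos {a b : ℝ} (ha : 0 < a) (hb : 0 < b) (n : ℕ) : 0 < kcoef a b n := by
  have h1 := ascPochhammer_pos n a ha
  have h2 := ascPochhammer_pos n b hb
  unfold kcoef
  positivity

lemma kcoef_succ (a : ℝ) {b : ℝ} (hb : 0 < b) (n : ℕ) :
    kcoef a b (n + 1) = kcoef a b n * ((a + n) / ((b + n) * (n + 1))) := by
  have h2 := ascPochhammer_pos n b hb
  have h3 : 0 < b + n := by positivity
  unfold kcoef
  rw [ascPochhammer_succ_eval, ascPochhammer_succ_eval, Nat.factorial_succ]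
  push_cast
  field_simp

lemma kummerM_eq_s8 (a b z : ℝ) : kummerM a b z = ∑' n, kcoef a b n * z ^ n := by
  unfold kummerM kcoef
  congr 1
  ext n
  ring

lemma kcoef_summable {a b : ℝ} (ha : 0 < a) (hb : 0 < b) (z : ℝ) :
    Summable (fun n => kcoef a b n * z ^ n) := by
  rcases eq_or_ne z 0 with rfl | hz
  · refine summable_of_ne_finset_zero (s := {0}) ?_
    intro n hn
    have : n ≠ 0 := by simpa using hn
    simp [this]
  refine summable_of_ratio_test_tendsto_lt_one (l := 0) one_pos ?_ ?_
  · exact Filter.Eventually.of_forall fun n =>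
      mul_ne_zero (kcoef_pos ha hb n).ne' (pow_ne_zero _ hz)
  · have hbound : Filter.Tendsto (fun n : ℕ => (a / b + 1) * |z| * (1 / ((n : ℝ) + 1)))
        Filter.atTop (nhds 0) := by
      simpa using tendsto_one_div_add_atTop_nhds_zero_nat.const_mul ((a / b + 1) * |z|)
    refine squeeze_zero (fun n => by positivity) (fun n => ?_) hbound
    have hc := kcoef_pos ha hb n
    have hbn : 0 < b + n := by positivity
    rw [kcoef_succ a hb, pow_succ]
    have : kcoef a b n * ((a + n) / ((b + n) * (n + 1))) * (z ^ n * z)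
        = (kcoef a b n * z ^ n) * ((a + n) / ((b + n) * (n + 1)) * z) := by ring
    have hne : ‖kcoef a b n * z ^ n‖ ≠ 0 :=
      norm_ne_zero_iff.2 (mul_ne_zero hc.ne' (pow_ne_zero _ hz))
    rw [this, norm_mul, mul_div_cancel_left₀ _ hne, norm_mul, Real.norm_eq_abs,
      Real.norm_eq_abs, abs_of_pos (by positivity)]
    have h : (a + n) / (b + n) ≤ a / b + 1 := by
      have e : a / b + 1 - (a + n) / (b + n) = (a * n + b * b) / (b * (b + n)) := by
        field_simp
        ring
      have : 0 ≤ (a * n + b * b) / (b * (b + n)) := by positivity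
      linarith
    calc (a + n) / ((b + n) * (n + 1)) * |z| = (a + n) / (b + n) * (|z| * (1 / ((n : ℝ) + 1))) := by
          field_simp
      _ ≤ (a / b + 1) * (|z| * (1 / ((n : ℝ) + 1))) := by gcongr
      _ = _ := by ring

lemma kummerM_hasSum {a b : ℝ} (ha : 0 < a) (hb : 0 < b) (z : ℝ) :
    HasSum (fun n => kcoef a b n * z ^ n) (kummerM a b z) := by
  rw [kummerM_eq_s8]
  exact (kcoef_summable ha hb z).hasSum

lemma kummerM_pos {a b z : ℝ} (ha : 0 < a) (hb : 0 < b) (hz : 0 < z) : 0 < kummerM a b z := by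
  rw [kummerM_eq_s8]
  exact (kcoef_summable ha hb z).tsum_pos
    (fun n => (mul_pos (kcoef_pos ha hb n) (pow_pos hz n)).le) 0
    (mul_pos (kcoef_pos ha hb 0) (pow_pos hz 0))

/-- Termwise differentiation, in terms of the Euler operator `z d/dz`. -/
lemma kummerM_hasDerivAt {a b : ℝ} (ha : 0 < a) (hb : 0 < b) (z : ℝ) :
    ∃ D, HasDerivAt (kummerM a b) D z ∧
      HasSum (fun n : ℕ => (n : ℝ) * (kcoef a b n * z ^ n)) (z * D) := by
  set R : ℝ := |z| + 1 with hR
  have hR1 : 1 ≤ R := by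
    have := abs_nonneg z
    linarith
  have hu : Summable (fun n => kcoef a b n * (2 * R) ^ n) := kcoef_summable ha hb _
  have hbd : ∀ (n : ℕ) (y : ℝ), y ∈ Metric.ball (0 : ℝ) R →
      ‖kcoef a b n * ((n : ℝ) * y ^ (n - 1))‖ ≤ kcoef a b n * (2 * R) ^ n := by
    intro n y hy
    have hy' : |y| ≤ R := by
      have := mem_ball_zero_iff.1 hy
      rw [Real.norm_eq_abs] at this
      exact this.le
    have hc := kcoef_pos ha hb n
    rw [norm_mul, norm_mul, norm_pow, Real.norm_eq_abs, Real.norm_eq_abs, Real.norm_eq_abs,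
      abs_of_pos hc, Nat.abs_cast, mul_pow]
    have h1 : (n : ℝ) ≤ 2 ^ n := by exact_mod_cast Nat.lt_two_pow_self.le
    have h2 : |y| ^ (n - 1) ≤ R ^ n :=
      (pow_le_pow_left₀ (abs_nonneg y) hy' _).trans (pow_le_pow_right₀ hR1 (Nat.sub_le n 1))
    gcongr
  have hz : z ∈ Metric.ball (0 : ℝ) R := by
    rw [mem_ball_zero_iff, Real.norm_eq_abs]
    linarith
  have hder := hasDerivAt_tsum_of_isPreconnected (g := fun n y => kcoef a b n * y ^ n)
    (g' := fun n y => kcoef a b n * ((n : ℝ) * y ^ (n - 1))) hu Metric.isOpen_ball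
    (convex_ball (0 : ℝ) R).isPreconnected
    (fun n y _ => (hasDerivAt_pow n y).const_mul _) hbd hz (kcoef_summable ha hb z) hz
  refine ⟨∑' n : ℕ, kcoef a b n * ((n : ℝ) * z ^ (n - 1)), ?_, ?_⟩
  rotate_left
  · have hs : Summable (fun n : ℕ => kcoef a b n * ((n : ℝ) * z ^ (n - 1))) :=
      Summable.of_norm_bounded hu fun n => hbd n z hz
    refine hasSum_of_eq (hs.hasSum.mul_left z) fun n => ?_
    cases n with
    | zero => simp
    | succ m =>
      simp only [Nat.add_sub_cancel]
      ring
  · have : kummerM a b = fun y => ∑' n, kcoef a b n * y ^ n := funext (kummerM_eq_s8 a b)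
    rw [this]
    exact hder

lemma kcoef_add_one (a b : ℝ) (n : ℕ) :
    a * kcoef (a + 1) b n = (a + n) * kcoef a b n := by
  have h : a * (ascPochhammer ℝ n).eval (a + 1) = (ascPochhammer ℝ n).eval a * (a + n) := by
    rw [← ascPochhammer_succ_eval, ascPochhammer_succ_left]
    simp [Polynomial.eval_comp]
  unfold kcoef
  calc _ = (a * (ascPochhammer ℝ n).eval (a + 1)) / (ascPochhammer ℝ n).eval b
          / (n.factorial : ℝ) := by ring
    _ = _ := by rw [h]; ring

/-- The relation `z M'(a) = a (M(a+1) - M(a))`. -/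
lemma kummer_hasDerivAt_up {a b z : ℝ} (ha : 0 < a) (hb : 0 < b) (hz : 0 < z) :
    HasDerivAt (kummerM a b) (a * (kummerM (a + 1) b z - kummerM a b z) / z) z := by
  obtain ⟨D, hD, hS⟩ := kummerM_hasDerivAt ha hb z
  have h := ((kummerM_hasSum (a := a + 1) (by linarith) hb z).sub
    (kummerM_hasSum ha hb z)).mul_left a
  have e : z * D = a * (kummerM (a + 1) b z - kummerM a b z) := by
    refine hS.unique ?_
    refine hasSum_of_eq h fun n => ?_
    linear_combination (z ^ n) * kcoef_add_one a b n
  rw [← e, mul_div_cancel_left₀ _ hz.ne']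
  exact hD

/-- The relation `z M'(a+1) = (b-a-1) M(a) - (b-a-1-z) M(a+1)`. -/
lemma kummer_hasDerivAt_down {a b z : ℝ} (ha : 0 < a) (hb : 0 < b) (hz : 0 < z) :
    HasDerivAt (kummerM (a + 1) b)
      (((b - a - 1) * kummerM a b z - (b - a - 1 - z) * kummerM (a + 1) b z) / z) z := by
  have ha1 : 0 < a + 1 := by linarith
  obtain ⟨D, hD, hS⟩ := kummerM_hasDerivAt ha1 hb z
  have h0 := kummerM_hasSum ha hb z
  have h1 := kummerM_hasSum ha1 hb z
  -- The difference of the other terms has no constant term; its shift is the series of `z M(a+1)`.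
  have h2 := hS.sub ((h0.sub h1).mul_left (b - a - 1))
  have h3 := (hasSum_nat_add_iff' 1).2 h2
  rw [Finset.sum_range_one] at h3
  simp only [kcoef_zero, pow_zero, Nat.cast_zero, zero_mul, sub_self, mul_zero, sub_zero] at h3
  have e : z * D - (b - a - 1) * (kummerM a b z - kummerM (a + 1) b z)
      = z * kummerM (a + 1) b z := by
    refine h3.unique (hasSum_of_eq (h1.mul_left z) fun n => ?_)
    have hbn : 0 < b + n := by positivity
    have q := kcoef_add_one a b (n + 1)
    have q' := kcoef_succ (a + 1) hb n
    have q'' : kcoef (a + 1) b (n + 1) * ((b + n) * (n + 1)) = kcoef (a + 1) b n * (a + 1 + n) := by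
      rw [q']
      field_simp
    have han : a + 1 + n ≠ 0 := by positivity
    push_cast at q ⊢
    have q3 : kcoef a b (n + 1) = a * kcoef (a + 1) b (n + 1) / (a + 1 + n) := by
      rw [eq_div_iff han]
      linarith
    have q4 : kcoef (a + 1) b n = kcoef (a + 1) b (n + 1) * ((b + n) * (n + 1)) / (a + 1 + n) := by
      rw [eq_div_iff han]
      linarith
    rw [q3, q4]
    field_simp
    ring
  have e' : z * D = (b - a - 1) * kummerM a b z - (b - a - 1 - z) * kummerM (a + 1) b z := by
    linarith
  rw [← e', mul_div_cancel_left₀ _ hz.ne']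
  exact hD

/-! ### The profile functions -/

/-- The function `e^{-z/2} z^lam M_{κ,η}(z)`; the values `κ = lam` and `κ = lam + 1` are used. -/
noncomputable def profile (lam κ η z : ℝ) : ℝ :=
  Real.exp (-z / 2) * z ^ lam * whittakerM κ η z

lemma profile_eq (lam κ η : ℝ) {z : ℝ} (hz : 0 < z) :
    profile lam κ η z =
      Real.exp (-z) * z ^ (η + lam + 1 / 2) * kummerM (η - κ + 1 / 2) (1 + 2 * η) z := by
  unfold profile whittakerM
  rw [show η + lam + 1 / 2 = lam + (η + 1 / 2) by ring, Real.rpow_add hz lam,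
    show Real.exp (-z) = Real.exp (-z / 2) * Real.exp (-z / 2) by rw [← Real.exp_add]; ring_nf]
  ring

lemma profile_hasDerivAt (lam κ η : ℝ) {z D : ℝ} (hz : 0 < z)
    (hD : HasDerivAt (kummerM (η - κ + 1 / 2) (1 + 2 * η)) D z) :
    HasDerivAt (profile lam κ η)
      (Real.exp (-z) * z ^ (η + lam + 1 / 2) *
        (D + ((η + lam + 1 / 2) / z - 1) * kummerM (η - κ + 1 / 2) (1 + 2 * η) z)) z := by
  have h1 : HasDerivAt (fun y : ℝ => Real.exp (-y)) (Real.exp (-z) * (-1)) z :=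
    (hasDerivAt_neg z).exp
  have h2 := Real.hasDerivAt_rpow_const (x := z) (p := η + lam + 1 / 2) (Or.inl hz.ne')
  have h := ((h1.mul h2).mul hD).congr_of_eventuallyEq (f₁ := profile lam κ η) (by
    filter_upwards [lt_mem_nhds hz] with y hy
    simpa using profile_eq lam κ η hy)
  refine HasDerivAt.congr_deriv h ?_
  rw [Real.rpow_sub_one hz.ne']
  simp only [Pi.mul_apply]
  field_simp
  ring

lemma whittaker_F_hasDerivAt {lam η z : ℝ} (hs : 0 < η - lam - 1 / 2) (hη : 0 < η) (hz : 0 < z) :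
    HasDerivAt (profile lam lam η)
      ((η + lam + 1 / 2) * profile lam (lam + 1) η z / z) z := by
  have hk := kummer_hasDerivAt_down (b := 1 + 2 * η) hs (by positivity) hz
  rw [show η - lam - 1 / 2 + 1 = η - lam + 1 / 2 by ring] at hk
  refine HasDerivAt.congr_deriv (profile_hasDerivAt lam lam η hz hk) ?_
  rw [profile_eq _ _ _ hz, show η - (lam + 1) + 1 / 2 = η - lam - 1 / 2 by ring]
  field_simp
  ring

lemma whittaker_G_hasDerivAt {lam η z : ℝ} (hs : 0 < η - lam - 1 / 2) (hη : 0 < η) (hz : 0 < z) :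
    HasDerivAt (profile lam (lam + 1) η)
      (((2 * lam + 1 - z) * profile lam (lam + 1) η z
        + (η - lam - 1 / 2) * profile lam lam η z) / z) z := by
  have hk := kummer_hasDerivAt_up (b := 1 + 2 * η) hs (by positivity) hz
  have e : η - (lam + 1) + 1 / 2 = η - lam - 1 / 2 := by ring
  rw [← e] at hk
  refine HasDerivAt.congr_deriv (profile_hasDerivAt lam (lam + 1) η hz hk) ?_
  rw [profile_eq _ _ _ hz, profile_eq _ _ _ hz, e,
    show η - lam - 1 / 2 + 1 = η - lam + 1 / 2 by ring]
  field_simp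
  ring

lemma profile_pos {lam κ η z : ℝ} (hs : 0 < η - κ + 1 / 2) (hη : 0 < η) (hz : 0 < z) :
    0 < profile lam κ η z := by
  have := kummerM_pos hs (show 0 < 1 + 2 * η by positivity) hz
  rw [profile_eq _ _ _ hz]
  positivity

/-! ### The Hamilton–Jacobi–Bellman equation -/

lemma hasDerivAt_rpow_log {h : ℝ → ℝ} {h' x : ℝ} (q : ℝ) (hh : HasDerivAt h h' x) (hx : 0 < h x) :
    HasDerivAt (fun y => h y ^ q) (q * (h x ^ q) * (h' / h x)) x := by
  refine HasDerivAt.congr_deriv (hh.rpow_const (p := q) (Or.inl hx.ne')) ?_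
  rw [Real.rpow_sub_one hx.ne']
  ring

/-- The HJB equation after division by the common factor `w^γ f^{1/δ} / (γ δ)`: an algebraic identity
in `Y = v ∂_v f / f`. Here `p = 2k / (σ² (e^{k(T-t)} - 1))` and `q = 1/δ`. -/
lemma hjb_algebra {μ ρ k Θ σ γ δ C lam q Y v p : ℝ} (hσ : σ ≠ 0) (hρ : ρ ≠ 0) (hγ : 1 - γ ≠ 0)
    (hv : v ≠ 0) (hδ0 : δ ≠ 0)
    (hδ : δ = 1 + ρ ^ 2 * γ / (1 - γ))
    (hC : C = -(γ / (1 - γ)) * (μ ^ 2 / 2) * δ)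
    (hlam : lam = -(k * Θ) / σ ^ 2 + (1 - δ) * μ / (ρ * σ)) (hq : q = 1 / δ) :
    Y * (k + σ ^ 2 * p / 2)
      + σ ^ 2 / (2 * v) * ((q - 1) * Y ^ 2 + (2 * lam - v * p) * Y + 2 * C / σ ^ 2)
      + k * (Θ - v) * (Y / v) + γ * δ * ((μ + ρ * σ * q * Y) ^ 2 / (2 * v * (1 - γ))) = 0 := by
  obtain ⟨e, he⟩ : ∃ e, e = γ / (1 - γ) := ⟨_, rfl⟩
  have hγe : γ * δ * ((μ + ρ * σ * q * Y) ^ 2 / (2 * v * (1 - γ)))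
      = e * δ * ((μ + ρ * σ * q * Y) ^ 2 / (2 * v)) := by
    rw [he]
    field_simp
  have hδe : δ = 1 + ρ ^ 2 * e := by rw [hδ, he]; ring
  rw [← he] at hC
  have hlam' : lam = -(k * Θ) / σ ^ 2 - ρ * e * μ / σ := by
    rw [hlam, hδe]
    field_simp
    ring
  have hee : e = (δ - 1) / ρ ^ 2 := by
    rw [hδe]
    field_simp
    ring
  rw [hγe, hlam', hC, hq, hee]
  field_simp
  ring

theorem stmt_8 (μ ρ k Θ σ T : ℝ) (hσ : 0 < σ) (hk : 0 < k)
    (hρ0 : 0 < |ρ|) (hρ1 : |ρ| < 1) (hμ : μ ≠ 0)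
    (γ : ℝ) (hγ : γ < 0)
    (δ C : ℝ)
    (hδ : δ = 1 + ρ ^ 2 * γ / (1 - γ))
    (hC : C = -(γ / (1 - γ)) * (μ ^ 2 / 2) * δ)
    (lam η : ℝ)
    (hlam : lam = -(k * Θ) / σ ^ 2 + (1 - δ) * μ / (ρ * σ))
    (hη : η = Real.sqrt ((lam + 1/2) ^ 2 + 2 * C / σ ^ 2))
    (Ψ : ℝ → ℝ → ℝ)
    (hΨ : ∀ v t, Ψ v t = 2 * k * v / (σ ^ 2 * (Real.exp (k * (T - t)) - 1)))
    (f : ℝ → ℝ → ℝ)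
    (hf : ∀ v t, f v t =
      Real.Gamma (η - lam + 1/2) / Real.Gamma (2 * η + 1) *
        Real.exp (-(Ψ v t) / 2) * (Ψ v t) ^ lam * whittakerM lam η (Ψ v t))
    (J : ℝ → ℝ → ℝ → ℝ)
    (hJ : ∀ w v t, J w v t = w ^ γ / γ * (f v t) ^ (1 / δ)) :
    ∀ w x v t, 0 < w → 0 < x → 0 < v → t < T →
      let Q : ℝ → ℝ := fun a =>
        a * μ * x * deriv (fun w' => J w' v t) w +
        a ^ 2 * x ^ 2 * v / 2 * deriv (fun w' => deriv (fun w'' => J w'' v t) w') w +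
        ρ * σ * v * a * x * deriv (fun v' => deriv (fun w' => J w' v' t) w) v
      let astar : ℝ := w / (x * (1 - γ)) *
        (μ / v + ρ * σ / δ * ((η + lam + 1/2) / v) *
          (whittakerM (lam + 1) η (Ψ v t) / whittakerM lam η (Ψ v t)))
      (deriv (fun t' => J w v t') t +
        σ ^ 2 * v / 2 * deriv (fun v' => deriv (fun v'' => J w v'' t) v') v +
        k * (Θ - v) * deriv (fun v' => J w v' t) v + Q astar = 0) ∧
      (∀ a : ℝ, Q a ≤ Q astar) := by
  intro w x v t hw hx hv ht Q astar
  have hρ : ρ ≠ 0 := abs_pos.1 hρ0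
  have h1γ : 0 < 1 - γ := by linarith
  have hρsq : ρ ^ 2 < 1 := (sq_lt_one_iff_abs_lt_one ρ).2 hρ1
  have hδ0 : 0 < δ := by
    have : δ = ((1 - γ) + ρ ^ 2 * γ) / (1 - γ) := by
      rw [hδ]
      field_simp
    rw [this]
    refine div_pos ?_ h1γ
    nlinarith
  have hC0 : 0 < C := by
    rw [hC]
    have : 0 < -(γ / (1 - γ)) := by
      rw [← neg_div]
      exact div_pos (by linarith) h1γ
    positivity
  have hηsq : η ^ 2 = (lam + 1/2) ^ 2 + 2 * C / σ ^ 2 := by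
    rw [hη, Real.sq_sqrt (by positivity)]
  have hηgt : |lam + 1/2| < η := by
    rw [hη]
    refine Real.lt_sqrt_of_sq_lt ?_
    rw [sq_abs]
    have : 0 < 2 * C / σ ^ 2 := by positivity
    linarith
  have hη0 : 0 < η := (abs_nonneg _).trans_lt hηgt
  have hs : 0 < η - lam - 1 / 2 := by
    have := le_abs_self (lam + 1/2)
    linarith
  set F := profile lam lam η with hF
  set G := profile lam (lam + 1) η with hG
  set r := η + lam + 1 / 2 with hr
  have hFpos : ∀ z, 0 < z → 0 < F z := fun z hz => profile_pos (by linarith) hη0 hz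
  have hFd : ∀ z, 0 < z → HasDerivAt F (r * G z / z) z :=
    fun z hz => whittaker_F_hasDerivAt hs hη0 hz
  have hGd : ∀ z, 0 < z → HasDerivAt G
      (((2 * lam + 1 - z) * G z + (η - lam - 1 / 2) * F z) / z) z :=
    fun z hz => whittaker_G_hasDerivAt hs hη0 hz
  have hrs : r * (η - lam - 1 / 2) = 2 * C / σ ^ 2 := by
    rw [hr]
    linear_combination hηsq
  set c := Real.Gamma (η - lam + 1/2) / Real.Gamma (2 * η + 1) with hc
  have hc0 : 0 < c := div_pos (Real.Gamma_pos_of_pos (by linarith))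
    (Real.Gamma_pos_of_pos (by linarith))
  have hexp : 0 < Real.exp (k * (T - t)) - 1 := by
    have : 0 < k * (T - t) := mul_pos hk (by linarith)
    have := Real.one_lt_exp_iff.2 this
    linarith
  obtain ⟨p, hp⟩ : ∃ p, p = 2 * k / (σ ^ 2 * (Real.exp (k * (T - t)) - 1)) := ⟨_, rfl⟩
  have hp0 : 0 < p := by
    rw [hp]
    positivity
  have hΨv : ∀ v', Ψ v' t = v' * p := by
    intro v'
    rw [hΨ, hp]
    ring
  have hfF : ∀ v' t', f v' t' = c * F (Ψ v' t') := by
    intro v' t'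
    rw [hf, hF, profile]
    ring
  have hz0 : 0 < v * p := mul_pos hv hp0
  obtain ⟨q, hq⟩ : ∃ q, q = 1 / δ := ⟨_, rfl⟩
  rw [← hq] at hJ
  have hfpos : ∀ v', 0 < v' → 0 < f v' t := by
    intro v' hv'
    rw [hfF, hΨv]
    exact mul_pos hc0 (hFpos _ (mul_pos hv' hp0))
  -- The function `v ∂_v f / f` on the slice at time `t`.
  set Y : ℝ → ℝ := fun v' => r * G (v' * p) / F (v' * p) with hY
  have hlin : ∀ v', HasDerivAt (fun y : ℝ => y * p) p v' := fun v' => by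
    simpa using (hasDerivAt_id v').mul_const p
  have hfv : ∀ v', 0 < v' → HasDerivAt (fun y => f y t) (f v' t * (Y v' / v')) v' := by
    intro v' hv'
    have hz : 0 < v' * p := mul_pos hv' hp0
    have hF' := (hFpos _ hz).ne'
    have h := ((hFd _ hz).comp v' (hlin v')).const_mul c
    have e : (fun y => f y t) = fun y => c * (F ∘ fun y => y * p) y := by
      ext y
      rw [hfF, hΨv]
      rfl
    rw [e]
    refine HasDerivAt.congr_deriv h ?_
    rw [hfF, hΨv, hY]
    field_simp
  have hYd : HasDerivAt Y (((2 * lam + 1 - v * p) * Y v + 2 * C / σ ^ 2 - Y v ^ 2) / v) v := by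
    have hF' := (hFpos _ hz0).ne'
    have hGc : HasDerivAt (fun y => G (y * p)) _ v :=
      HasDerivAt.comp (h₂ := G) v (hGd (v * p) hz0) (hlin v)
    have hFc : HasDerivAt (fun y => F (y * p)) _ v :=
      HasDerivAt.comp (h₂ := F) v (hFd (v * p) hz0) (hlin v)
    have h := (hGc.const_mul r).div hFc hF'
    refine HasDerivAt.congr_deriv h ?_
    rw [← hrs, hY]
    simp only
    field_simp
  set g : ℝ → ℝ := fun v' => f v' t ^ q with hg
  have hgd : ∀ v', 0 < v' → HasDerivAt g (q * g v' * (Y v' / v')) v' := by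
    intro v' hv'
    refine HasDerivAt.congr_deriv (hasDerivAt_rpow_log q (hfv v' hv') (hfpos v' hv')) ?_
    rw [mul_div_cancel_left₀ _ (hfpos v' hv').ne']
  have hg0 : 0 < g v := Real.rpow_pos_of_pos (hfpos v hv) q
  obtain ⟨S, hS⟩ : ∃ S, S = w ^ γ := ⟨_, rfl⟩
  have hS0 : 0 < S := by
    rw [hS]
    exact Real.rpow_pos_of_pos hw γ
  have hJg : ∀ w' v', J w' v' t = w' ^ γ / γ * g v' := fun w' v' => hJ w' v' t
  have hγ0 : γ ≠ 0 := hγ.ne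
  have hJw : ∀ w' v', 0 < w' → HasDerivAt (fun y => J y v' t) (w' ^ (γ - 1) * g v') w' := by
    intro w' v' hw'
    simp only [hJg]
    refine HasDerivAt.congr_deriv (((Real.hasDerivAt_rpow_const (x := w') (p := γ) (Or.inl hw'.ne')).div_const γ).mul_const
      (g v')) ?_
    field_simp
  have dw : deriv (fun w' => J w' v t) w = S / w * g v := by
    rw [(hJw w v hw).deriv, Real.rpow_sub_one hw.ne', hS]
  have dww : deriv (fun w' => deriv (fun w'' => J w'' v t) w') w = (γ - 1) * S / w ^ 2 * g v := by
    have h := (Real.hasDerivAt_rpow_const (x := w) (p := γ - 1) (Or.inl hw.ne')).mul_const (g v)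
    have e : (fun w' => deriv (fun w'' => J w'' v t) w') =ᶠ[nhds w]
        fun w' => w' ^ (γ - 1) * g v := by
      filter_upwards [lt_mem_nhds hw] with y hy
      exact (hJw y v hy).deriv
    rw [(h.congr_of_eventuallyEq e).deriv, Real.rpow_sub_one hw.ne', Real.rpow_sub_one hw.ne', hS]
    field_simp
  have dwv : deriv (fun v' => deriv (fun w' => J w' v' t) w) v
      = S / w * (q * g v * (Y v / v)) := by
    have e : (fun v' => deriv (fun w' => J w' v' t) w) = fun v' => w ^ (γ - 1) * g v' := by
      ext y
      exact (hJw w y hw).deriv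
    rw [e, ((hgd v hv).const_mul _).deriv, Real.rpow_sub_one hw.ne', hS]
  have hJv : ∀ v', 0 < v' → HasDerivAt (fun y => J w y t) (S / γ * (q * g v' * (Y v' / v'))) v' := by
    intro v' hv'
    simp only [hJg, ← hS]
    exact (hgd v' hv').const_mul _
  have dv : deriv (fun v' => J w v' t) v = S / γ * (q * g v * (Y v / v)) := (hJv v hv).deriv
  have dvv : deriv (fun v' => deriv (fun v'' => J w v'' t) v') v
      = S / γ * q * g v / v ^ 2 * ((q - 1) * Y v ^ 2 + (2 * lam - v * p) * Y v + 2 * C / σ ^ 2) := by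
    have h := (((hgd v hv).const_mul q).mul (hYd.div (hasDerivAt_id v) hv.ne')).const_mul (S / γ)
    have e : (fun v' => deriv (fun v'' => J w v'' t) v') =ᶠ[nhds v]
        fun v' => S / γ * (q * g v' * (Y v' / v')) := by
      filter_upwards [lt_mem_nhds hv] with y hy
      exact (hJv y hy).deriv
    have h' := (h.congr_of_eventuallyEq (f₁ := fun v' => deriv (fun v'' => J w v'' t) v') e).deriv
    rw [h']
    simp only [Pi.div_apply, id]
    field_simp
    ring
  have dt : deriv (fun t' => J w v t') t = S / γ * (q * g v * (Y v * (k + σ ^ 2 * p / 2))) := by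
    have h1 : HasDerivAt (fun t' => σ ^ 2 * (Real.exp (k * (T - t')) - 1))
        (σ ^ 2 * (Real.exp (k * (T - t)) * (k * (-1)))) t :=
      (((((hasDerivAt_id t).const_sub T).const_mul k).exp).sub_const 1).const_mul (σ ^ 2)
    have h2 : HasDerivAt (fun t' => Ψ v t') (v * p * (k + σ ^ 2 * p / 2)) t := by
      simp only [hΨ]
      refine HasDerivAt.congr_deriv ((hasDerivAt_const t (2 * k * v)).div h1 (by positivity)) ?_
      rw [hp]
      field_simp
      ring
    have h3 : HasDerivAt (fun t' => f v t') (f v t * (Y v * (k + σ ^ 2 * p / 2))) t := by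
      simp only [hfF]
      have hF' := (hFpos _ hz0).ne'
      have h4 : HasDerivAt F (r * G (v * p) / (v * p)) (Ψ v t) := by
        rw [hΨv]
        exact hFd _ hz0
      refine HasDerivAt.congr_deriv ((h4.comp t h2).const_mul c) ?_
      rw [hΨv, hY]
      field_simp
    simp only [hJ, ← hS]
    rw [((hasDerivAt_rpow_log q h3 (hfpos v hv)).const_mul (S / γ)).deriv,
      mul_div_cancel_left₀ _ (hfpos v hv).ne']
  have hratio : ρ * σ / δ * (r / v) * (whittakerM (lam + 1) η (Ψ v t) / whittakerM lam η (Ψ v t))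
      = ρ * σ * q * Y v / v := by
    rw [hΨv, hY, hq, hF, hG]
    have hF' := hFpos _ hz0
    have he := Real.exp_pos (-(v * p) / 2)
    have hpw := Real.rpow_pos_of_pos hz0 lam
    have hne : whittakerM lam η (v * p) ≠ 0 := by
      intro h0
      rw [hF, profile, h0] at hF'
      simp at hF'
    simp only [profile]
    field_simp
  -- the vertex form of the quadratic `Q`
  have hQ : ∀ a, Q a = S * g v * ((μ + ρ * σ * q * Y v) ^ 2 / (2 * v * (1 - γ))
      - (1 - γ) * v / 2 * (a * x / w - (μ + ρ * σ * q * Y v) / (v * (1 - γ))) ^ 2) := by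
    intro a
    simp only [Q]
    rw [dw, dww, dwv]
    have := h1γ.ne'
    field_simp
    ring
  have hastar : astar * x / w = (μ + ρ * σ * q * Y v) / (v * (1 - γ)) := by
    simp only [astar]
    rw [hratio]
    field_simp
  have hQs : Q astar = S * g v * ((μ + ρ * σ * q * Y v) ^ 2 / (2 * v * (1 - γ))) := by
    rw [hQ, hastar]
    ring
  refine ⟨?_, ?_⟩
  · rw [dt, dv, dvv, hQs]
    have key := hjb_algebra (k := k) (Θ := Θ) (Y := Y v) (p := p) hσ.ne' hρ h1γ.ne' hv.ne' hδ0.ne'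
      hδ hC hlam hq
    have hqδ : q * δ = 1 := by
      rw [hq]
      field_simp
    have e1 : σ ^ 2 * v / 2 * (S / γ * q * g v / v ^ 2 *
        ((q - 1) * Y v ^ 2 + (2 * lam - v * p) * Y v + 2 * C / σ ^ 2))
        = S / γ * q * g v * (σ ^ 2 / (2 * v) *
        ((q - 1) * Y v ^ 2 + (2 * lam - v * p) * Y v + 2 * C / σ ^ 2)) := by
      field_simp
    have e2 : ∀ X, S * g v * X = S / γ * q * g v * (γ * δ * X) := by
      intro X
      have : S / γ * q * g v * (γ * δ * X) = (S / γ * γ) * (q * δ) * g v * X := by ring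
      rw [this, hqδ, div_mul_cancel₀ _ hγ0]
      ring
    rw [e1, e2]
    linear_combination (S / γ * q * g v) * key
  · intro a
    rw [hQs, hQ]
    refine mul_le_mul_of_nonneg_left ?_ (mul_pos hS0 hg0).le
    have : 0 ≤ (1 - γ) * v / 2 * (a * x / w - (μ + ρ * σ * q * Y v) / (v * (1 - γ))) ^ 2 := by
      positivity
    linarith
end

section
/- Let γ < 0, ρ ∈ (−1,1), and δ = 1 + ρ²γ/(1−γ). Let μ, σ, a, b : D → ℝ be continuous functions on an open set D ⊆ (0,∞)×ℝ with σ(v,t) > 0 on D, and let f : D → ℝ be twice continuously differenti376able, strictly positive, and satisfy ∂f/∂t + (a(v,t)²/2)·∂²f/∂v² + ( b(v,t) + ρ·(γ/(1−γ))·(μ(v,t)·a(v,t)/σ(v,t)) )·∂f/∂v + (γ/(1−γ))·(δ/2)·(μ(v,t)²/σ(v,t)²)·f = 0 on D. Define J(w,v,t) = (w^γ/γ)·f(v,t)^{1/δ} for w > 0 and (v,t) ∈ D. Then for every w > 0, x > 0, and (v,t) ∈ D: ∂J/∂t + (a(v,t)²/2)·∂²J/∂v² + b(v,t)·∂J/∂v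 + sup_{α∈ℝ} [ α·μ(v,t)·x·∂J/∂w + (α²x²σ(v,t)²/2)·∂²J/∂w² + ρ·a(v,t)·σ(v,t)·x·α·∂²J/∂w∂v ] = 0, and the supremum is attained at α* = (w/(x(1−γ))) · ( μ(v,t)/σ(v,t)² + (ρ/δ)·(a(v,t)/σ(v,t))·(∂f/∂v)(v,t)/f(v,t) ). -/
/-!
Write `β = 1 / δ`. For fixed `(v, t)` the Hamiltonian `Q` is a quadratic in `α` whose leading
coefficient has the sign of `∂²J/∂w² = (γ - 1) w ^ (γ - 2) f ^ β < 0`, so completing the square gives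
the maximiser `αstar` and the maximum `w ^ γ f ^ β (m + ρ a s β f_v / f)² / (2 s² (1 - γ))`.
Substituting this into the Hamilton–Jacobi–Bellman equation and dividing by
`(w ^ γ / γ) β f ^ (β - 1)` leaves the linear equation for `f` plus a multiple of
`a² f_v² / f * (β - 1 + β ρ² γ / (1 - γ))`. The choice of the distortion power `δ` makes that
last factor vanish.

The partial derivatives of `J` are computed in `deriv_const_mul_rpow` and
`deriv_deriv_const_mul_rpow`; the two algebraic facts are `hjb_identity` and `quadratic_le`.
-/

lemma deriv_const_mul_rpow {g : ℝ → ℝ} {y : ℝ} (c β : ℝ) (hg : DifferentiableAt ℝ g y)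
    (hpos : 0 < g y) :
    deriv (fun z => c * g z ^ β) y = c * (deriv g y * β * g y ^ (β - 1)) :=
  ((hg.hasDerivAt.rpow_const (p := β) (Or.inl hpos.ne')).const_mul c).deriv

lemma deriv_deriv_const_mul_rpow {g : ℝ → ℝ} {y : ℝ} (c β : ℝ)
    (hg : ∀ᶠ z in nhds y, DifferentiableAt ℝ g z ∧ 0 < g z)
    (hg' : DifferentiableAt ℝ (deriv g) y) :
    deriv (fun z => deriv (fun z' => c * g z' ^ β) z) y =
      c * β * (deriv (deriv g) y * g y ^ (β - 1) +
        (β - 1) * deriv g y ^ 2 * g y ^ (β - 2)) := by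
  have h1 : (fun z => deriv (fun z' => c * g z' ^ β) z) =ᶠ[nhds y]
      fun z => c * (deriv g z * β * g z ^ (β - 1)) := by
    filter_upwards [hg] with z hz
    exact deriv_const_mul_rpow c β hz.1 hz.2
  obtain ⟨hd, hpos⟩ := hg.self_of_nhds
  rw [h1.deriv_eq]
  have h2 := ((hg'.hasDerivAt.mul_const β).mul
    (hd.hasDerivAt.rpow_const (p := β - 1) (Or.inl hpos.ne'))).const_mul c
  refine h2.deriv.trans ?_
  rw [show β - 1 - 1 = β - 2 by ring]
  ring

/-- The Hamilton–Jacobi–Bellman equation at the maximiser, as an identity between the values of the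
functions involved at one point: `W = w ^ γ`, `G = F ^ (1 / δ)`, and `F`, `Ft`, `Fv`, `Fvv` are
`f` and its partial derivatives. -/
lemma hjb_identity {γ ρ δ w x m s a b F Ft Fv Fvv W G : ℝ}
    (hγ : γ ≠ 0) (hγ1 : 1 - γ ≠ 0) (hδ0 : δ ≠ 0) (hw : w ≠ 0) (hx : x ≠ 0) (hs : s ≠ 0)
    (hF : F ≠ 0) (hδ : δ = 1 + ρ ^ 2 * γ / (1 - γ))
    (hpde : Ft + a ^ 2 / 2 * Fvv + (b + ρ * (γ / (1 - γ)) * (m * a / s)) * Fv +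
        γ / (1 - γ) * (δ / 2) * (m ^ 2 / s ^ 2) * F = 0)
    {α : ℝ} (hα : α = w / (x * (1 - γ)) * (m / s ^ 2 + ρ / δ * (a / s) * (Fv / F))) :
    W / γ * (Ft * (1 / δ) * (G / F)) +
      a ^ 2 / 2 * (W / γ * (1 / δ) * (Fvv * (G / F) + (1 / δ - 1) * Fv ^ 2 * (G / F ^ 2))) +
      b * (W / γ * (Fv * (1 / δ) * (G / F))) +
      (α * m * x * (W / w * G) + α ^ 2 * x ^ 2 * s ^ 2 / 2 * ((γ - 1) * (W / w ^ 2) * G) +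
        ρ * a * s * x * α * (W / w * (Fv * (1 / δ) * (G / F)))) = 0 := by
  have hFt : Ft = -(a ^ 2 / 2 * Fvv + (b + ρ * (γ / (1 - γ)) * (m * a / s)) * Fv +
        γ / (1 - γ) * (δ / 2) * (m ^ 2 / s ^ 2) * F) := by linarith
  have hρ : ρ ^ 2 = (δ - 1) * (1 - γ) / γ := by
    rw [hδ]; field_simp; ring
  -- The maximum of the quadratic, with `ρ ^ 2` expanded out so that it can be eliminated.
  have hmax : α * m * x * (W / w * G) +
      α ^ 2 * x ^ 2 * s ^ 2 / 2 * ((γ - 1) * (W / w ^ 2) * G) +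
        ρ * a * s * x * α * (W / w * (Fv * (1 / δ) * (G / F))) =
      W * G / (2 * s ^ 2 * (1 - γ)) *
        (m ^ 2 + 2 * ρ * m * a * s * Fv / (δ * F) + ρ ^ 2 * (a * s * Fv / (δ * F)) ^ 2) := by
    rw [hα]; field_simp; ring
  rw [hmax, hρ, hFt]
  field_simp
  ring

/-- A concave quadratic is maximal at its critical point. -/
lemma quadratic_le {p q α₀ : ℝ} (hq : q ≤ 0) (h0 : p + 2 * q * α₀ = 0) (α : ℝ) :
    p * α + q * α ^ 2 ≤ p * α₀ + q * α₀ ^ 2 := by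
  obtain rfl : p = -(2 * q * α₀) := by linarith
  nlinarith [mul_nonneg (neg_nonneg.2 hq) (sq_nonneg (α - α₀))]

theorem stmt_10 (γ ρ : ℝ) (hγ : γ < 0) (hρ : ρ ∈ Set.Ioo (-1 : ℝ) 1)
    (δ : ℝ) (hδ : δ = 1 + ρ ^ 2 * γ / (1 - γ))
    (D : Set (ℝ × ℝ)) (hD : IsOpen D) (hDsub : D ⊆ Set.Ioi (0 : ℝ) ×ˢ Set.univ)
    (m s a b : ℝ → ℝ → ℝ)
    (hm : ContinuousOn (fun p : ℝ × ℝ => m p.1 p.2) D)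
    (hs : ContinuousOn (fun p : ℝ × ℝ => s p.1 p.2) D)
    (ha : ContinuousOn (fun p : ℝ × ℝ => a p.1 p.2) D)
    (hb : ContinuousOn (fun p : ℝ × ℝ => b p.1 p.2) D)
    (hspos : ∀ v t, (v, t) ∈ D → 0 < s v t)
    (f : ℝ → ℝ → ℝ)
    (hf : ContDiffOn ℝ 2 (fun p : ℝ × ℝ => f p.1 p.2) D)
    (hfpos : ∀ v t, (v, t) ∈ D → 0 < f v t)
    (hpde : ∀ v t, (v, t) ∈ D →
      deriv (fun t' => f v t') t +
        (a v t) ^ 2 / 2 * deriv (fun v' => deriv (fun v'' => f v'' t) v') v +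
        (b v t + ρ * (γ / (1 - γ)) * (m v t * a v t / s v t)) *
          deriv (fun v' => f v' t) v +
        γ / (1 - γ) * (δ / 2) * ((m v t) ^ 2 / (s v t) ^ 2) * f v t = 0)
    (J : ℝ → ℝ → ℝ → ℝ)
    (hJ : ∀ w v t, J w v t = w ^ γ / γ * (f v t) ^ (1 / δ)) :
    ∀ w x v t, 0 < w → 0 < x → (v, t) ∈ D →
      let Q : ℝ → ℝ := fun α =>
        α * m v t * x * deriv (fun w' => J w' v t) w +
        α ^ 2 * x ^ 2 * (s v t) ^ 2 / 2 *
          deriv (fun w' => deriv (fun w'' => J w'' v t) w') w +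
        ρ * a v t * s v t * x * α * deriv (fun v' => deriv (fun w' => J w' v' t) w) v
      let αstar : ℝ := w / (x * (1 - γ)) *
        (m v t / (s v t) ^ 2 +
          ρ / δ * (a v t / s v t) * (deriv (fun v' => f v' t) v / f v t))
      (deriv (fun t' => J w v t') t +
        (a v t) ^ 2 / 2 * deriv (fun v' => deriv (fun v'' => J w v'' t) v') v +
        b v t * deriv (fun v' => J w v' t) v + Q αstar = 0) ∧
      (∀ α : ℝ, Q α ≤ Q αstar) := by
  intro w x v t hw hx hvt Q αstar
  have hγ1 : 0 < 1 - γ := by linarith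
  have hδpos : 0 < δ := by
    have hρ2 : ρ ^ 2 < 1 := by nlinarith [hρ.1, hρ.2]
    have : δ = (1 - γ * (1 - ρ ^ 2)) / (1 - γ) := by
      rw [hδ]; field_simp; ring
    rw [this]
    apply div_pos _ hγ1
    nlinarith
  have hF := hfpos v t hvt
  have hS := hspos v t hvt
  have hslice : Continuous fun v' : ℝ => (v', t) := by fun_prop
  have hnear : ∀ᶠ v' in nhds v, (v', t) ∈ D :=
    hslice.continuousAt.eventually (hD.mem_nhds hvt)
  have hcd : ∀ v', (v', t) ∈ D → ContDiffAt ℝ 2 (fun z => f z t) v' := fun v' hv' =>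
    (hf.contDiffAt (hD.mem_nhds hv')).comp (f := fun z : ℝ => (z, t)) v'
      (contDiffAt_id.prodMk contDiffAt_const)
  have hdt : DifferentiableAt ℝ (fun z => f v z) t :=
    ((hf.contDiffAt (hD.mem_nhds hvt)).comp (f := fun z : ℝ => (v, z)) t
      (contDiffAt_const.prodMk contDiffAt_id)).differentiableAt (by norm_num)
  have hdv : ∀ᶠ z in nhds v, DifferentiableAt ℝ (fun z => f z t) z ∧ 0 < f z t := by
    filter_upwards [hnear] with z hz
    exact ⟨(hcd z hz).differentiableAt (by norm_num), hfpos z t hz⟩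
  have hdvv : DifferentiableAt ℝ (deriv fun z => f z t) v :=
    ((hcd v hvt).derivWithin (m := 1) (by norm_num)).differentiableAt (by norm_num)
  have hW1 : w ^ (γ - 1) = w ^ γ / w := Real.rpow_sub_one hw.ne' γ
  have hW2 : w ^ (γ - 2) = w ^ γ / w ^ 2 := by
    rw [Real.rpow_sub hw]; norm_num
  have hG1 : f v t ^ (1 / δ - 1) = f v t ^ (1 / δ) / f v t := Real.rpow_sub_one hF.ne' _
  have hG2 : f v t ^ (1 / δ - 2) = f v t ^ (1 / δ) / f v t ^ 2 := by
    rw [Real.rpow_sub hF]; norm_num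
  have hJw : ∀ w' v', 0 < w' →
      deriv (fun w'' => J w'' v' t) w' = w' ^ (γ - 1) * f v' t ^ (1 / δ) := by
    intro w' v' hw'
    simp only [hJ]
    have h := (((hasDerivAt_id w').rpow_const (p := γ) (Or.inl hw'.ne')).div_const γ).mul_const
      (f v' t ^ (1 / δ))
    refine h.deriv.trans ?_
    have hγ0 := hγ.ne
    simp only [id]
    field_simp
  have hJww : deriv (fun w' => deriv (fun w'' => J w'' v t) w') w =
      (γ - 1) * (w ^ γ / w ^ 2) * f v t ^ (1 / δ) := by
    have h1 : (fun w' => deriv (fun w'' => J w'' v t) w') =ᶠ[nhds w]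
        fun w' => w' ^ (γ - 1) * f v t ^ (1 / δ) := by
      filter_upwards [lt_mem_nhds hw] with w' hw'
      exact hJw w' v hw'
    rw [h1.deriv_eq]
    refine (((hasDerivAt_id w).rpow_const (p := γ - 1) (Or.inl hw.ne')).mul_const _).deriv.trans ?_
    simp only [id]
    rw [show γ - 1 - 1 = γ - 2 by ring, hW2]
    ring
  have hJwv : deriv (fun v' => deriv (fun w' => J w' v' t) w) v =
      w ^ γ / w * (deriv (fun v' => f v' t) v * (1 / δ) * (f v t ^ (1 / δ) / f v t)) := by
    simp only [hJw w _ hw]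
    rw [deriv_const_mul_rpow _ _ hdv.self_of_nhds.1 hF, hG1, hW1]
  have hJt : deriv (fun t' => J w v t') t =
      w ^ γ / γ * (deriv (fun t' => f v t') t * (1 / δ) * (f v t ^ (1 / δ) / f v t)) := by
    simp only [hJ]
    rw [deriv_const_mul_rpow _ _ hdt hF, hG1]
  have hJv : deriv (fun v' => J w v' t) v =
      w ^ γ / γ * (deriv (fun v' => f v' t) v * (1 / δ) * (f v t ^ (1 / δ) / f v t)) := by
    simp only [hJ]
    rw [deriv_const_mul_rpow _ _ hdv.self_of_nhds.1 hF, hG1]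
  have hJvv : deriv (fun v' => deriv (fun v'' => J w v'' t) v') v =
      w ^ γ / γ * (1 / δ) * (deriv (fun v' => deriv (fun v'' => f v'' t) v') v *
        (f v t ^ (1 / δ) / f v t) + (1 / δ - 1) * deriv (fun v' => f v' t) v ^ 2 *
          (f v t ^ (1 / δ) / f v t ^ 2)) := by
    simp only [hJ]
    rw [deriv_deriv_const_mul_rpow _ _ hdv hdvv, hG1, hG2]
  have hJw0 : deriv (fun w'' => J w'' v t) w = w ^ γ / w * f v t ^ (1 / δ) := by
    rw [hJw w v hw, hW1]
  have hWpos : 0 < w ^ γ := Real.rpow_pos_of_pos hw γ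
  have hGpos : 0 < f v t ^ (1 / δ) := Real.rpow_pos_of_pos hF _
  refine ⟨?_, fun α => ?_⟩
  · simp only [Q]
    rw [hJt, hJvv, hJv, hJw0, hJww, hJwv]
    exact hjb_identity hγ.ne hγ1.ne' hδpos.ne' hw.ne' hx.ne' hS.ne' hF.ne' hδ (hpde v t hvt) rfl
  · simp only [Q]
    rw [hJw0, hJww, hJwv]
    have h := quadratic_le
      (p := m v t * x * (w ^ γ / w * f v t ^ (1 / δ)) + ρ * a v t * s v t * x *
        (w ^ γ / w * (deriv (fun v' => f v' t) v * (1 / δ) * (f v t ^ (1 / δ) / f v t))))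
      (q := x ^ 2 * s v t ^ 2 / 2 * ((γ - 1) * (w ^ γ / w ^ 2) * f v t ^ (1 / δ)))
      (α₀ := αstar) ?_ ?_ α
    · linarith
    · have : 0 ≤ x ^ 2 * s v t ^ 2 / 2 * ((1 - γ) * (w ^ γ / w ^ 2) * f v t ^ (1 / δ)) := by
        positivity
      linarith
    · simp only [αstar]
      generalize w ^ γ = W
      generalize f v t ^ (1 / δ) = G
      have := hF.ne'
      have := hS.ne'
      field_simp
      ring
end

section
/- Let c > 0, ρ ∈ (−1,1), and δ = 1 − ρ². Let μ, σ, a, b : D → ℝ be continuous functions on an open set D ⊆ (0,∞)×ℝ with σ(v,t) > 0 on D, and let f : D → ℝ be twice continuously differentiable, strictly positive, and satisfy ∂f/∂t + (a(v,t)²/2)·∂²f/∂v² + ( b(v,t) − ρ·μ(v,t)·a(v,t)/σ(v,t) )·∂f/∂v − (δ/2)·(μ(v,t)²/σ(v,t)²)·f = 0 on D. Define J(w,v,t) = 1 − (e^{−cw}/c)·f(v,t)^{1/δ} for w ∈ ℝ and (v,t) ∈ D. Then for every w ∈ ℝ, x > 0, and (v,t) ∈ D: ∂J/∂t + (a(v,t)²/2)·∂²J/∂v²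 + b(v,t)·∂J/∂v + sup_{α∈ℝ} [ α·μ(v,t)·x·∂J/∂w + (α²x²σ(v,t)²/2)·∂²J/∂w² + ρ·a(v,t)·σ(v,t)·x·α·∂²J/∂w∂v ] = 0, and the supremum is attained at α* = (1/(c·x)) · ( μ(v,t)/σ(v,t)² + (ρ/δ)·(a(v,t)/σ(v,t))·(∂f/∂v)(v,t)/f(v,t) ). -/
/-!
Write `E = exp (-(c w))`, `g = f ^ (1/δ)` and `p = f_v / f`. The `w`-derivatives of `J` are
`J_w = E g` and `J_ww = -c E g`, and the chain rule gives `g_v = (1/δ) g p` and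
`g_vv = (1/δ) g (f_vv / f + (1/δ - 1) p²)`. Hence `Q` is a concave quadratic in `α`, and completing
the square, `Q α = Q αstar - c E g x² s² (α - αstar)² / 2`, gives the maximality of `αstar`.

After substituting `Q αstar`, the left-hand side of the nonlinear equation is `-(E g / (c δ f))`
times the left-hand side of the linear equation for `f`: the two `p²` terms,
`(a² / (2δ)) (1/δ - 1) p²` from `g_vv` and `ρ² a² p² / (2δ²)` from `Q αstar`, cancel because
`1 - δ = ρ²`. This choice of the exponent `1/δ` is what linearizes the equation.
-/

/-- Derivative of a power of a positive function, with the power of the function factored out so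
that all the derivatives of `J` share the factor `f ^ (1/δ)`. -/
lemma hasDerivAt_rpow_factored {F : ℝ → ℝ} {F' y : ℝ} (h : ℝ) (hF : HasDerivAt F F' y)
    (hpos : 0 < F y) :
    HasDerivAt (fun z => F z ^ h) (h * (F y ^ h * (F' / F y))) y := by
  convert hF.rpow_const (p := h) (Or.inl hpos.ne') using 1
  rw [Real.rpow_sub_one hpos.ne']
  ring

lemma hasDerivAt_deriv_rpow {F : ℝ → ℝ} {y : ℝ} (h : ℝ) (hF : ContDiffAt ℝ 2 F y)
    (hpos : 0 < F y) :
    HasDerivAt (deriv (fun z => F z ^ h))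
      (h * F y ^ h * (deriv (deriv F) y / F y + (h - 1) * (deriv F y / F y) ^ 2)) y := by
  have hd : HasDerivAt F (deriv F y) y := (hF.differentiableAt (by norm_num)).hasDerivAt
  have hdd : HasDerivAt (deriv F) (deriv (deriv F) y) y := by
    have h1 : ContDiffAt ℝ 1 (deriv F) y := 
      (hF.fderiv_right (m := 1) (by norm_num)).clm_apply contDiffAt_const
    exact (h1.differentiableAt (by norm_num)).hasDerivAt
  have hev : deriv (fun z => F z ^ h) =ᶠ[nhds y]
      fun z => h * (F z ^ h * (deriv F z / F z)) := by
    filter_upwards [hF.eventually (by simp), hF.continuousAt.eventually (lt_mem_nhds hpos)]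
      with z hz hz0
    exact (hasDerivAt_rpow_factored h
      (hz.differentiableAt (by norm_num)).hasDerivAt hz0).deriv
  have hprod :=
    ((hasDerivAt_rpow_factored h hd hpos).fun_mul (hdd.fun_div hd hpos.ne')).const_mul h
  refine (hprod.congr_of_eventuallyEq hev).congr_deriv ?_
  generalize F y ^ h = G
  have := hpos.ne'
  field_simp
  ring

theorem stmt_11 (c ρ : ℝ) (hc : 0 < c) (hρ : ρ ∈ Set.Ioo (-1 : ℝ) 1)
    (δ : ℝ) (hδ : δ = 1 - ρ ^ 2)
    (D : Set (ℝ × ℝ)) (hD : IsOpen D) (hDsub : D ⊆ Set.Ioi (0 : ℝ) ×ˢ Set.univ)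
    (m s a b : ℝ → ℝ → ℝ)
    (hm : ContinuousOn (fun p : ℝ × ℝ => m p.1 p.2) D)
    (hs : ContinuousOn (fun p : ℝ × ℝ => s p.1 p.2) D)
    (ha : ContinuousOn (fun p : ℝ × ℝ => a p.1 p.2) D)
    (hb : ContinuousOn (fun p : ℝ × ℝ => b p.1 p.2) D)
    (hspos : ∀ v t, (v, t) ∈ D → 0 < s v t)
    (f : ℝ → ℝ → ℝ)
    (hf : ContDiffOn ℝ 2 (fun p : ℝ × ℝ => f p.1 p.2) D)
    (hfpos : ∀ v t, (v, t) ∈ D → 0 < f v t)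
    (hpde : ∀ v t, (v, t) ∈ D →
      deriv (fun t' => f v t') t +
        (a v t) ^ 2 / 2 * deriv (fun v' => deriv (fun v'' => f v'' t) v') v +
        (b v t - ρ * (m v t * a v t / s v t)) * deriv (fun v' => f v' t) v -
        δ / 2 * ((m v t) ^ 2 / (s v t) ^ 2) * f v t = 0)
    (J : ℝ → ℝ → ℝ → ℝ)
    (hJ : ∀ w v t, J w v t = 1 - Real.exp (-(c * w)) / c * (f v t) ^ (1 / δ)) :
    ∀ (w : ℝ) (x v t : ℝ), 0 < x → (v, t) ∈ D →
      let Q : ℝ → ℝ := fun α =>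
        α * m v t * x * deriv (fun w' => J w' v t) w +
        α ^ 2 * x ^ 2 * (s v t) ^ 2 / 2 *
          deriv (fun w' => deriv (fun w'' => J w'' v t) w') w +
        ρ * a v t * s v t * x * α * deriv (fun v' => deriv (fun w' => J w' v' t) w) v
      let αstar : ℝ := 1 / (c * x) *
        (m v t / (s v t) ^ 2 +
          ρ / δ * (a v t / s v t) * (deriv (fun v' => f v' t) v / f v t))
      (deriv (fun t' => J w v t') t +
        (a v t) ^ 2 / 2 * deriv (fun v' => deriv (fun v'' => J w v'' t) v') v +
        b v t * deriv (fun v' => J w v' t) v + Q αstar = 0) ∧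
      (∀ α : ℝ, Q α ≤ Q αstar) := by
  intro w x v t hx hvt Q αstar
  have hδ0 : 0 < δ := by
    obtain ⟨h1, h2⟩ := hρ
    rw [hδ]
    nlinarith
  have hs0 := hspos v t hvt
  have hf0 := hfpos v t hvt
  have hP := hpde v t hvt
  have hfc : ContDiffAt ℝ 2 (fun p : ℝ × ℝ => f p.1 p.2) (v, t) :=
    hf.contDiffAt (hD.mem_nhds hvt)
  have hfv : ContDiffAt ℝ 2 (fun v' => f v' t) v :=
    ContDiffAt.comp (f := fun v' : ℝ => (v', t)) v hfc (by fun_prop)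
  have hft : ContDiffAt ℝ 2 (fun t' => f v t') t :=
    ContDiffAt.comp (f := fun t' : ℝ => (v, t')) t hfc (by fun_prop)
  have hdv : HasDerivAt (fun v' => f v' t) (deriv (fun v' => f v' t) v) v :=
    (hfv.differentiableAt (by norm_num)).hasDerivAt
  have hdt : HasDerivAt (fun t' => f v t') (deriv (fun t' => f v t') t) t :=
    (hft.differentiableAt (by norm_num)).hasDerivAt
  have hgv := hasDerivAt_rpow_factored (1 / δ) hdv hf0
  have hgt := hasDerivAt_rpow_factored (1 / δ) hdt hf0
  have hgvv := hasDerivAt_deriv_rpow (1 / δ) hfv hf0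
  have hexp : ∀ w', HasDerivAt (fun w'' => Real.exp (-(c * w'')))
      (-(c * Real.exp (-(c * w')))) w' := by
    intro w'
    have hlin : HasDerivAt (fun w'' => -(c * w'')) (-(c * 1)) w' :=
      ((hasDerivAt_id w').const_mul c).neg
    convert hlin.exp using 1
    ring
  have hJw : ∀ v' w', deriv (fun w'' => J w'' v' t) w'
      = Real.exp (-(c * w')) * f v' t ^ (1 / δ) := by
    intro v' w'
    simp only [hJ]
    have := ((((hexp w').div_const c).mul_const (f v' t ^ (1 / δ))).const_sub 1).deriv
    rw [this]
    field_simp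
  have hJww : deriv (fun w' => deriv (fun w'' => J w'' v t) w') w
      = -(c * Real.exp (-(c * w))) * f v t ^ (1 / δ) := by
    simp only [hJw]
    exact ((hexp w).mul_const _).deriv
  have hJwv : deriv (fun v' => deriv (fun w' => J w' v' t) w) v
      = Real.exp (-(c * w)) * (1 / δ * (f v t ^ (1 / δ) *
        (deriv (fun v' => f v' t) v / f v t))) := by
    simp only [hJw]
    exact (hgv.const_mul _).deriv
  have hJt : deriv (fun t' => J w v t') t = -(Real.exp (-(c * w)) / c * (1 / δ *
      (f v t ^ (1 / δ) * (deriv (fun t' => f v t') t / f v t)))) := by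
    simp only [hJ]
    exact ((hgt.const_mul _).const_sub 1).deriv
  have hJv : deriv (fun v' => J w v' t) v = -(Real.exp (-(c * w)) / c * (1 / δ *
      (f v t ^ (1 / δ) * (deriv (fun v' => f v' t) v / f v t)))) := by
    simp only [hJ]
    exact ((hgv.const_mul _).const_sub 1).deriv
  have hJvv : deriv (fun v' => deriv (fun v'' => J w v'' t) v') v
      = -(Real.exp (-(c * w)) / c * (1 / δ * f v t ^ (1 / δ) *
        (deriv (fun v' => deriv (fun v'' => f v'' t) v') v / f v t +
          (1 / δ - 1) * (deriv (fun v' => f v' t) v / f v t) ^ 2))) := by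
    simp only [hJ, deriv_const_sub, deriv_const_mul_field]
    exact ((hgvv.const_mul _).neg).deriv
  have hE : 0 < Real.exp (-(c * w)) := Real.exp_pos _
  have hg : 0 < f v t ^ (1 / δ) := Real.rpow_pos_of_pos hf0 _
  simp only [Q]
  rw [hJww, hJwv, hJt, hJv, hJvv, hJw]
  generalize Real.exp (-(c * w)) = E at *
  generalize f v t ^ (1 / δ) = g at *
  generalize deriv (fun v' => deriv (fun v'' => f v'' t) v') v = fvv at *
  generalize hfv' : deriv (fun v' => f v' t) v = fv at *
  generalize deriv (fun t' => f v t') t = ft at *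
  have hα : αstar = 1 / (c * x) * (m v t / (s v t) ^ 2 +
      ρ / δ * (a v t / s v t) * (fv / f v t)) := by
    simp only [αstar, hfv']
  clear_value αstar
  clear hJww hJwv hJt hJv hJvv hJw hgv hgt hgvv hdv hdt hfv hft hfc hpde hexp hJ hf hfv' Q
  generalize f v t = F at *
  generalize s v t = S at *
  generalize m v t = M at *
  generalize a v t = A at *
  generalize b v t = B at *
  constructor
  · -- The linear equation, solved for the time derivative, with `1 - δ = ρ²` for the `p²` terms.
    have hft : ft = δ / 2 * (M ^ 2 / S ^ 2) * F - A ^ 2 / 2 * fvv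
        - (B - ρ * (M * A / S)) * fv := by linarith
    have hδ' : 1 / δ - 1 = ρ ^ 2 / δ := by
      rw [div_sub_one hδ0.ne', hδ]
      ring
    rw [hδ', hα, hft]
    field_simp
    ring
  · intro α
    have key : 0 ≤ c * E * g * x ^ 2 * S ^ 2 / 2 * (α - αstar) ^ 2 := by positivity
    -- The first-order condition for `αstar`.
    have hfoc : c * x * S ^ 2 * αstar = M + ρ * A * S * (1 / δ) * (fv / F) := by
      rw [hα]
      field_simp
    linear_combination key - (α - αstar) * E * g * x * hfoc
end

section
/- For every fixed v > 0, the function f(v,t) = (Γ(η−λ+1/2)/Γ(2η+1)) · e^{−Ψ(v,t)/2} · Ψ(v,t)^λ · M_{λ,η}(Ψ(v,t)) satisfies lim_{t→−∞} v · (∂f/∂v)(v,t) / f(v,t) = η + λ + 1/2; i.e., the logarithmic derivative f_v/f is asymptotically equivalent to (η+λ+1/2)/v as Ψ(v,t) → 0. -/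
/-- A geometric bound on the Kummer coefficients, which already gives a positive radius of
convergence. It follows from `(a + n) / ((b + n) (n + 1)) ≤ a + 1`. -/
lemma kummer_coeff_bound {a b : ℝ} (ha : 0 < a) (hb : 1 ≤ b) (n : ℕ) :
    0 ≤ (ascPochhammer ℝ n).eval a / (ascPochhammer ℝ n).eval b / (n.factorial : ℝ) ∧
    (ascPochhammer ℝ n).eval a / (ascPochhammer ℝ n).eval b / (n.factorial : ℝ) ≤ (a + 1) ^ n := by
  induction n with
  | zero => simp
  | succ n ih =>
    obtain ⟨h0, h1⟩ := ih
    have hbn : (1 : ℝ) ≤ b + n := by have : (0 : ℝ) ≤ n := n.cast_nonneg; linarith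
    have hn : (0 : ℝ) ≤ n := n.cast_nonneg
    have hpb : 0 < (ascPochhammer ℝ n).eval b := ascPochhammer_pos n b (by linarith)
    have hfac : (0 : ℝ) < n.factorial := by exact_mod_cast n.factorial_pos
    have key : (ascPochhammer ℝ (n + 1)).eval a / (ascPochhammer ℝ (n + 1)).eval b
        / ((n + 1).factorial : ℝ) =
        ((ascPochhammer ℝ n).eval a / (ascPochhammer ℝ n).eval b / (n.factorial : ℝ)) *
          ((a + n) / ((b + n) * (n + 1))) := by
      rw [ascPochhammer_succ_eval, ascPochhammer_succ_eval, Nat.factorial_succ]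
      push_cast
      field_simp
    have hr : (a + n) / ((b + n) * (n + 1)) ≤ a + 1 := by
      rw [div_le_iff₀ (by positivity)]
      have h2 : (n + 1 : ℝ) ≤ (b + n) * (n + 1) := by nlinarith
      have h3 : (a + 1) * (n + 1 : ℝ) ≤ (a + 1) * ((b + n) * (n + 1)) := by gcongr
      nlinarith
    have hr0 : 0 ≤ (a + n) / ((b + n) * (n + 1)) := by positivity
    rw [key, pow_succ]
    exact ⟨mul_nonneg h0 hr0, mul_le_mul h1 hr hr0 (by positivity)⟩

lemma kummerM_analyticAt {a b : ℝ} (ha : 0 < a) (hb : 1 ≤ b) :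
    AnalyticAt ℝ (kummerM a b) 0 := by
  set c : ℕ → ℝ := fun n =>
    (ascPochhammer ℝ n).eval a / (ascPochhammer ℝ n).eval b / (n.factorial : ℝ) with hc
  set p := FormalMultilinearSeries.ofScalars ℝ c with hp
  have hsum : kummerM a b = p.sum := by
    funext z
    simp only [kummerM, hp, FormalMultilinearSeries.sum]
    refine tsum_congr fun n => ?_
    rw [FormalMultilinearSeries.ofScalars_apply_eq, smul_eq_mul, hc]
    ring
  have hrad : 0 < p.radius := by
    let r : NNReal := ⟨1 / (a + 1), by positivity⟩
    have hr : 0 < r := by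
      change (0 : ℝ) < 1 / (a + 1)
      positivity
    refine lt_of_lt_of_le (ENNReal.coe_pos.2 hr) (p.le_radius_of_bound 1 fun n => ?_)
    obtain ⟨h0, h1⟩ := kummer_coeff_bound ha hb n
    rw [hp, FormalMultilinearSeries.ofScalars_norm, Real.norm_of_nonneg h0]
    change c n * (1 / (a + 1)) ^ n ≤ 1
    rw [div_pow, one_pow, mul_one_div]
    exact (div_le_one (by positivity)).2 h1
  rw [hsum]
  exact (p.hasFPowerSeriesOnBall hrad).analyticAt

lemma kummerM_zero (a b : ℝ) : kummerM a b 0 = 1 := by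
  unfold kummerM
  rw [tsum_eq_single 0 (fun n hn => by simp [hn])]
  simp

/-- The limit of the logarithmic derivative of `f` in the single variable `z = Ψ v t`. -/
lemma tendsto_mul_logDeriv {A lam η : ℝ} (hA : A ≠ 0) (ha : 0 < η - lam + 1/2) (hη : 0 ≤ η) :
    Filter.Tendsto (fun z => z * logDeriv (fun z : ℝ =>
        A * Real.exp (-z / 2) * z ^ lam * whittakerM lam η z) z)
      (nhdsWithin 0 (Set.Ioi 0)) (nhds (η + lam + 1/2)) := by
  have hM := kummerM_analyticAt ha (show (1 : ℝ) ≤ 1 + 2 * η by linarith)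
  set M := kummerM (η - lam + 1/2) (1 + 2 * η) with hMdef
  have hM0 : M 0 = 1 := kummerM_zero _ _
  have hMne : ∀ᶠ z in nhds (0 : ℝ), M z ≠ 0 :=
    hM.continuousAt.eventually_ne (by rw [hM0]; exact one_ne_zero)
  have hMd : ∀ᶠ z in nhds (0 : ℝ), DifferentiableAt ℝ M z :=
    hM.eventually_analyticAt.mono fun z hz => hz.differentiableAt
  have hlim : Filter.Tendsto (fun z => -z + (η + lam + 1/2) + z * (deriv M z / M z))
      (nhds 0) (nhds (η + lam + 1/2)) := by
    have hcont : ContinuousAt (fun z => -z + (η + lam + 1/2) + z * (deriv M z / M z)) 0 := by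
      have h1 := hM.deriv.continuousAt
      have h2 := hM.continuousAt
      have h3 : M 0 ≠ 0 := by rw [hM0]; exact one_ne_zero
      have h4 := h1.div h2 h3
      exact (continuousAt_id.neg.add continuousAt_const).add (continuousAt_id.mul h4)
    simpa [ContinuousAt] using hcont
  refine (hlim.mono_left nhdsWithin_le_nhds).congr' ?_
  filter_upwards [hMne.filter_mono nhdsWithin_le_nhds, hMd.filter_mono nhdsWithin_le_nhds,
    self_mem_nhdsWithin] with z hz hzd hpos
  have hpos : 0 < z := hpos
  have hg : HasDerivAt (fun z : ℝ => A * Real.exp (-z / 2) * z ^ lam * whittakerM lam η z) _ z :=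
    (((((hasDerivAt_id z).neg.div_const 2).exp.const_mul A).mul
      (Real.hasDerivAt_rpow_const (p := lam) (Or.inl hpos.ne'))).mul
      (((((hasDerivAt_id z).neg.div_const 2).exp).mul
      (Real.hasDerivAt_rpow_const (p := η + 1/2) (Or.inl hpos.ne'))).mul hzd.hasDerivAt))
  rw [logDeriv_apply, hg.deriv]
  have e1 := (Real.rpow_pos_of_pos hpos lam).ne'
  have e2 := (Real.rpow_pos_of_pos hpos (η + 1/2)).ne'
  have e3 := (Real.exp_pos (-z / 2)).ne'
  simp only [whittakerM, ← hMdef, id, Pi.neg_apply, Pi.mul_apply, Real.rpow_sub_one hpos.ne']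
  generalize z ^ lam = x at *
  generalize z ^ (η + 1/2) = y at *
  generalize Real.exp (-z / 2) = w at *
  field_simp
  ring

theorem stmt_13 (μ ρ k Θ σ T : ℝ) (hσ : 0 < σ) (hk : 0 < k) (hρ : ρ ≠ 0)
    (δ C : ℝ) (hδ : 0 < δ) (hC : 0 < C)
    (lam η : ℝ)
    (hlam : lam = -(k * Θ) / σ ^ 2 + (1 - δ) * μ / (ρ * σ))
    (hη : η = Real.sqrt ((lam + 1/2) ^ 2 + 2 * C / σ ^ 2))
    (Ψ : ℝ → ℝ → ℝ)
    (hΨ : ∀ v t, Ψ v t = 2 * k * v / (σ ^ 2 * (Real.exp (k * (T - t)) - 1)))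
    (f : ℝ → ℝ → ℝ)
    (hf : ∀ v t, f v t =
      Real.Gamma (η - lam + 1/2) / Real.Gamma (2 * η + 1) *
        Real.exp (-(Ψ v t) / 2) * (Ψ v t) ^ lam * whittakerM lam η (Ψ v t)) :
    ∀ v, 0 < v →
      Filter.Tendsto (fun t => v * deriv (fun v' => f v' t) v / f v t) Filter.atBot
        (nhds (η + lam + 1/2)) := by
  intro v hv
  have hpos : (lam + 1/2) ^ 2 < (lam + 1/2) ^ 2 + 2 * C / σ ^ 2 := by
    have : 0 < 2 * C / σ ^ 2 := by positivity
    linarith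
  have hηabs : |lam + 1/2| < η := by
    rw [hη, ← Real.sqrt_sq_eq_abs]
    exact Real.sqrt_lt_sqrt (sq_nonneg _) hpos
  have hη0 : 0 ≤ η := (abs_nonneg _).trans hηabs.le
  have ha : 0 < η - lam + 1/2 := by
    have := le_abs_self (lam + 1/2)
    linarith
  have hA : Real.Gamma (η - lam + 1/2) / Real.Gamma (2 * η + 1) ≠ 0 :=
    div_ne_zero (Real.Gamma_pos_of_pos ha).ne' (Real.Gamma_pos_of_pos (by linarith)).ne'
  have hlim := tendsto_mul_logDeriv hA ha hη0
  have hexp : Filter.Tendsto (fun t => Real.exp (k * (T - t)) - 1) Filter.atBot Filter.atTop := by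
    refine Filter.tendsto_atTop_add_const_right _ _ (Real.tendsto_exp_atTop.comp ?_)
    refine Filter.Tendsto.const_mul_atTop hk ?_
    exact (Filter.tendsto_atTop_add_const_left Filter.atBot T
      Filter.tendsto_neg_atBot_atTop).congr fun t => (sub_eq_add_neg T t).symm
  have hΨlim : Filter.Tendsto (fun t => Ψ v t) Filter.atBot (nhdsWithin 0 (Set.Ioi 0)) := by
    refine tendsto_nhdsWithin_iff.2 ⟨?_, ?_⟩
    · simp only [hΨ]
      exact (hexp.const_mul_atTop (by positivity : 0 < σ ^ 2)).const_div_atTop _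
    · filter_upwards [hexp.eventually_gt_atTop 0] with t ht
      rw [hΨ, Set.mem_Ioi]
      positivity
  refine (hlim.comp hΨlim).congr fun t => ?_
  set g : ℝ → ℝ := fun z => Real.Gamma (η - lam + 1/2) / Real.Gamma (2 * η + 1) *
    Real.exp (-z / 2) * z ^ lam * whittakerM lam η z with hg
  set c := 2 * k / (σ ^ 2 * (Real.exp (k * (T - t)) - 1)) with hc
  have hΨc : ∀ v', Ψ v' t = c * v' := fun v' => by rw [hΨ, hc]; ring
  have hfg : ∀ v', f v' t = g (c * v') := fun v' => by rw [hf, hΨc]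
  simp only [hfg, Function.comp_apply, hΨc, logDeriv_apply]
  rw [deriv_comp_mul_left, smul_eq_mul]
  ring
end
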